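/- Let ε, A > 0 and let u₀ ∈ C¹(ℝ²), u₁ ∈ C(ℝ²) be radially symmetric with |∇u₀(x)| ≤ A (1 + |x|)^{−3/2−ε}, |u₁(x)| ≤ A (1 + |x|)^{−3/2−ε}, and |u₀(x)| ≤ A (1 + |x|)^{−1/2−ε} for all x ∈ ℝ². Then there exists a constant C = C(ε, A) < ∞, depending only on ε and A, such that every twice continuously differentiable global solution u : ℝ² × ℝ → ℝ of the defocusing quintic wave equation ∂ₜ²u − Δu = −|u|⁴u with u(·,0) = u₀ and ∂ₜu(·,0) = u₁ has finite space-time sextic norm: ∫_ℝ ∫_{ℝ²} |u(x,t)|⁶ dx dt ≤ C. -/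

import Mathlib

open MeasureTheory Set

/-!
Uniqueness for the wave equation, proved by an energy estimate on a backward cone, applies to `u`
and its composition with a reflection: the solution is radial, and its profile `U t r` solves
`∂ₜ²U = ∂ᵣ²U + ∂ᵣU / r - U ^ 5`.

Outside the light cone, `√r U` solves the one-dimensional wave equation up to the source
`√r U (1/4 - (√r U) ^ 4) / r ^ 2`. Integrating along characteristics, a continuity argument shows
that `√r U` stays small for `r ≥ t + R`, with `|√r U| ≲ (r - t) ^ (-ε)` and
`|(∂ₜ + ∂ᵣ)(√r U)| ≲ (r + t) ^ (-1 - ε)`. The first bound makes `r U ^ 6` integrable there.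

For `r ≤ t + R`, translate time so that this region becomes the cone `r ≤ s`, `s ≥ R`. With
`τ = √((s + 1) ^ 2 - r ^ 2)`, the multiplier
`(2 (s + 1) - τ) ∂ₜ + ((r ^ 2 + (s + 1) ^ 2 - (s + 1) τ) / r) ∂ᵣ + 1` produces a divergence equal to
`-r U ^ 6 / 3` minus a square. Its flux through the lateral boundary is integrable by the decay of
`(∂ₜ + ∂ᵣ)(√r U)`, while the top contributes at least `-1/8` because the density is a nonnegative
quadratic form plus an exact derivative. Negative times follow by time reversal.
-/

theorem fderiv_fderiv_apply_const {𝕜 X Y : Type*} [RCLike 𝕜] [NormedAddCommGroup X]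
    [NormedSpace 𝕜 X] [NormedAddCommGroup Y] [NormedSpace 𝕜 Y] {f : X → Y}
    (hf : ContDiff 𝕜 2 f) (x v w : X) :
    fderiv 𝕜 (fun y => fderiv 𝕜 f y v) x w = fderiv 𝕜 (fderiv 𝕜 f) x w v := by
  have hf' : DifferentiableAt 𝕜 (fderiv 𝕜 f) x :=
    (hf.fderiv_right le_rfl).differentiable one_ne_zero x
  simp [fderiv_clm_apply hf' (differentiableAt_const v)]

/-! ### Functions of time and radius -/

/-- The partial derivative in time of a function `F` of time and radius. -/
noncomputable def timeDeriv (F : ℝ → ℝ → ℝ) (t r : ℝ) : ℝ := deriv (fun s => F s r) t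

/-- The partial derivative in the radius of a function `F` of time and radius. -/
noncomputable def radialDeriv (F : ℝ → ℝ → ℝ) (t r : ℝ) : ℝ := deriv (F t) r

local notation "∂ₜ" => timeDeriv
local notation "∂ᵣ" => radialDeriv

section PartialDerivatives

variable {F : ℝ → ℝ → ℝ} {t r : ℝ}

theorem timeDeriv_eq_fderiv (hF : DifferentiableAt ℝ F.uncurry (t, r)) :
    ∂ₜ F t r = fderiv ℝ F.uncurry (t, r) (1, 0) :=
  (HasFDerivAt.comp_hasDerivAt (f := fun s => (s, r)) t hF.hasFDerivAt
    ((hasDerivAt_id t).prodMk (hasDerivAt_const t r))).deriv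

theorem radialDeriv_eq_fderiv (hF : DifferentiableAt ℝ F.uncurry (t, r)) :
    ∂ᵣ F t r = fderiv ℝ F.uncurry (t, r) (0, 1) :=
  (HasFDerivAt.comp_hasDerivAt (f := fun s => (t, s)) r hF.hasFDerivAt
    ((hasDerivAt_const r t).prodMk (hasDerivAt_id r))).deriv

theorem hasFDerivAt_uncurry (hF : DifferentiableAt ℝ F.uncurry (t, r)) :
    HasFDerivAt F.uncurry (∂ₜ F t r • ContinuousLinearMap.fst ℝ ℝ ℝ +
      ∂ᵣ F t r • ContinuousLinearMap.snd ℝ ℝ ℝ) (t, r) := by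
  convert hF.hasFDerivAt using 1
  ext <;> simp [timeDeriv_eq_fderiv hF, radialDeriv_eq_fderiv hF]

theorem hasDerivAt_along_curve {a b : ℝ → ℝ} {a' b' x : ℝ}
    (hF : DifferentiableAt ℝ F.uncurry (a x, b x))
    (ha : HasDerivAt a a' x) (hb : HasDerivAt b b' x) :
    HasDerivAt (fun y => F (a y) (b y))
      (∂ₜ F (a x) (b x) * a' + ∂ᵣ F (a x) (b x) * b') x :=
  (HasFDerivAt.comp_hasDerivAt (f := fun y => (a y, b y)) x (hasFDerivAt_uncurry hF)
    (ha.prodMk hb)).congr_deriv (by simp)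

theorem hasDerivAt_timeDeriv (hF : DifferentiableAt ℝ F.uncurry (t, r)) :
    HasDerivAt (fun s => F s r) (∂ₜ F t r) t := by
  simpa using hasDerivAt_along_curve hF (hasDerivAt_id t) (hasDerivAt_const t r)

theorem hasDerivAt_radialDeriv (hF : DifferentiableAt ℝ F.uncurry (t, r)) :
    HasDerivAt (F t) (∂ᵣ F t r) r := by
  simpa using hasDerivAt_along_curve hF (hasDerivAt_const r t) (hasDerivAt_id r)

theorem contDiffAt_timeDeriv {n : WithTop ℕ∞} {z : ℝ × ℝ}
    (hF : ContDiffAt ℝ (n + 1) F.uncurry z) : ContDiffAt ℝ n (∂ₜ F).uncurry z := by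
  have h : (∂ₜ F).uncurry =ᶠ[nhds z] fun w => fderiv ℝ F.uncurry w (1, 0) := by
    filter_upwards [(hF.of_le le_add_self).eventually (by simp)] with w hw
    exact timeDeriv_eq_fderiv (hw.differentiableAt one_ne_zero)
  exact ((hF.fderiv_right le_rfl).clm_apply contDiffAt_const).congr_of_eventuallyEq h

theorem contDiffAt_radialDeriv {n : WithTop ℕ∞} {z : ℝ × ℝ}
    (hF : ContDiffAt ℝ (n + 1) F.uncurry z) : ContDiffAt ℝ n (∂ᵣ F).uncurry z := by
  have h : (∂ᵣ F).uncurry =ᶠ[nhds z] fun w => fderiv ℝ F.uncurry w (0, 1) := by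
    filter_upwards [(hF.of_le le_add_self).eventually (by simp)] with w hw
    exact radialDeriv_eq_fderiv (hw.differentiableAt one_ne_zero)
  exact ((hF.fderiv_right le_rfl).clm_apply contDiffAt_const).congr_of_eventuallyEq h

theorem radialDeriv_timeDeriv_comm (hF : ContDiff ℝ 2 F.uncurry) (t r : ℝ) :
    ∂ᵣ (∂ₜ F) t r = ∂ₜ (∂ᵣ F) t r := by
  have hd : Differentiable ℝ F.uncurry := hF.differentiable two_ne_zero
  have hdd : DifferentiableAt ℝ (fderiv ℝ F.uncurry) (t, r) :=
    (hF.fderiv_right le_rfl).differentiable one_ne_zero _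
  have h₁ : (∂ₜ F).uncurry = fun z => fderiv ℝ F.uncurry z (1, 0) :=
    funext fun z => timeDeriv_eq_fderiv (hd z)
  have h₂ : (∂ᵣ F).uncurry = fun z => fderiv ℝ F.uncurry z (0, 1) :=
    funext fun z => radialDeriv_eq_fderiv (hd z)
  rw [radialDeriv_eq_fderiv (h₁ ▸ hdd.clm_apply (differentiableAt_const _)),
    timeDeriv_eq_fderiv (h₂ ▸ hdd.clm_apply (differentiableAt_const _)), h₁, h₂,
    fderiv_fderiv_apply_const hF, fderiv_fderiv_apply_const hF]
  exact (hF.contDiffAt.isSymmSndFDerivAt (by simp)).eq (0, 1) (1, 0)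

end PartialDerivatives

/-- A `C²` function `U t r` of time and radius solving, for `r > 0`, the radial form in the plane
of the defocusing quintic wave equation. -/
structure IsRadialSolution (U : ℝ → ℝ → ℝ) : Prop where
  contDiff : ContDiff ℝ 2 U.uncurry
  equation : ∀ t r, 0 < r → ∂ₜ (∂ₜ U) t r = ∂ᵣ (∂ᵣ U) t r + ∂ᵣ U t r / r - U t r ^ 5

namespace IsRadialSolution

variable {U : ℝ → ℝ → ℝ}

theorem contDiff_timeDeriv (hU : IsRadialSolution U) : ContDiff ℝ 1 (∂ₜ U).uncurry :=
  contDiff_iff_contDiffAt.2 fun _ => contDiffAt_timeDeriv hU.contDiff.contDiffAt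

theorem contDiff_radialDeriv (hU : IsRadialSolution U) : ContDiff ℝ 1 (∂ᵣ U).uncurry :=
  contDiff_iff_contDiffAt.2 fun _ => contDiffAt_radialDeriv hU.contDiff.contDiffAt

theorem differentiable (hU : IsRadialSolution U) : Differentiable ℝ U.uncurry :=
  hU.contDiff.differentiable two_ne_zero

theorem differentiable_timeDeriv (hU : IsRadialSolution U) : Differentiable ℝ (∂ₜ U).uncurry :=
  hU.contDiff_timeDeriv.differentiable one_ne_zero

theorem differentiable_radialDeriv (hU : IsRadialSolution U) :
    Differentiable ℝ (∂ᵣ U).uncurry :=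
  hU.contDiff_radialDeriv.differentiable one_ne_zero

end IsRadialSolution

/-! ### Decay outside the light cone -/

theorem abs_le_of_abs_deriv_le {f f' B B' : ℝ → ℝ} {a b : ℝ} (hab : a ≤ b)
    (hf : ∀ x ∈ Icc a b, HasDerivAt f (f' x) x) (ha : |f a| ≤ B a)
    (hB : ContinuousOn B (Icc a b)) (hB' : ∀ x ∈ Ico a b, HasDerivAt B (B' x) x)
    (hle : ∀ x ∈ Ico a b, |f' x| ≤ B' x) : |f b| ≤ B b :=
  image_norm_le_of_norm_deriv_right_le_deriv_boundary'
    (fun x hx => (hf x hx).continuousAt.continuousWithinAt)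
    (fun x hx => (hf x (Ico_subset_Icc_self hx)).hasDerivWithinAt) ha hB
    (fun x hx => (hB' x hx).hasDerivWithinAt) hle (right_mem_Icc.2 hab)

/-- The derivative `(∂ₜ + ∂ᵣ)(√r U)` of `√r U` along the outgoing characteristics `r - t = const`,
written out. -/
noncomputable def outgoing (U : ℝ → ℝ → ℝ) (t r : ℝ) : ℝ :=
  √r * (∂ₜ U t r + ∂ᵣ U t r) + U t r / (2 * √r)

/-- The Cauchy data of `U` at time `0` are bounded by `A (1 + r) ^ (-1/2 - ε)`, and those of its
first derivatives by `A (1 + r) ^ (-3/2 - ε)`. -/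
structure HasDecayingData (ε A : ℝ) (U : ℝ → ℝ → ℝ) : Prop where
  abs_le : ∀ r, 0 ≤ r → |U 0 r| ≤ A * (1 + r) ^ (-(1 / 2) - ε)
  abs_timeDeriv_le : ∀ r, 0 ≤ r → |∂ₜ U 0 r| ≤ A * (1 + r) ^ (-(3 / 2) - ε)
  abs_radialDeriv_le : ∀ r, 0 ≤ r → |∂ᵣ U 0 r| ≤ A * (1 + r) ^ (-(3 / 2) - ε)

namespace HasDecayingData

variable {U : ℝ → ℝ → ℝ} {ε A r : ℝ}

theorem mono {ε' : ℝ} (hU : HasDecayingData ε A U) (hA : 0 ≤ A) (hε : ε' ≤ ε) :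
    HasDecayingData ε' A U where
  abs_le r hr := (hU.abs_le r hr).trans (by gcongr; linarith)
  abs_timeDeriv_le r hr := (hU.abs_timeDeriv_le r hr).trans (by gcongr; linarith)
  abs_radialDeriv_le r hr := (hU.abs_radialDeriv_le r hr).trans (by gcongr; linarith)

theorem sqrt_mul_abs_le (hU : HasDecayingData ε A U) (hε : 0 ≤ ε) (hA : 0 ≤ A) (hr : 0 < r) :
    √r * |U 0 r| ≤ A * r ^ (-ε) := by
  have hmono : (1 + r) ^ (-(1 / 2) - ε) ≤ r ^ (-(1 / 2) - ε) :=
    Real.rpow_le_rpow_of_nonpos hr (by linarith) (by linarith)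
  calc √r * |U 0 r| ≤ √r * (A * r ^ (-(1 / 2) - ε)) := by
        gcongr
        exact (hU.abs_le r hr.le).trans (by gcongr)
    _ = A * r ^ (-ε) := by
        rw [Real.sqrt_eq_rpow, mul_left_comm, ← Real.rpow_add hr]
        ring_nf

theorem abs_outgoing_le (hU : HasDecayingData ε A U) (hε : 0 ≤ ε) (hA : 0 ≤ A) (hr : 0 < r) :
    |outgoing U 0 r| ≤ 5 / 2 * A * r ^ (-1 - ε) := by
  have hs : 0 < √r := Real.sqrt_pos.2 hr
  have hmono : (1 + r) ^ (-(3 / 2) - ε) ≤ r ^ (-(3 / 2) - ε) :=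
    Real.rpow_le_rpow_of_nonpos hr (by linarith) (by linarith)
  have hsum : |∂ₜ U 0 r + ∂ᵣ U 0 r| ≤ 2 * A * r ^ (-(3 / 2) - ε) := by
    have h₁ := hU.abs_timeDeriv_le r hr.le
    have h₂ := hU.abs_radialDeriv_le r hr.le
    have h₃ := abs_add_le (∂ₜ U 0 r) (∂ᵣ U 0 r)
    have h₄ := mul_le_mul_of_nonneg_left hmono hA
    linarith
  have hpow₁ : √r * r ^ (-(3 / 2) - ε) = r ^ (-1 - ε) := by
    rw [Real.sqrt_eq_rpow, ← Real.rpow_add hr]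
    ring_nf
  have hpow₂ : r ^ (-ε) / r = r ^ (-1 - ε) := by
    rw [← Real.rpow_sub_one hr.ne']
    ring_nf
  have hU_div : |U 0 r| / (2 * √r) = √r * |U 0 r| / (2 * r) := by
    rw [div_eq_div_iff (by positivity) (by positivity)]
    linear_combination -2 * |U 0 r| * Real.mul_self_sqrt hr.le
  calc |outgoing U 0 r| ≤ √r * |∂ₜ U 0 r + ∂ᵣ U 0 r| + √r * |U 0 r| / (2 * r) := by
        refine (abs_add_le _ _).trans_eq ?_
        rw [abs_mul, abs_div, abs_of_pos hs, abs_of_pos (by positivity : 0 < 2 * √r), hU_div]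
    _ ≤ √r * (2 * A * r ^ (-(3 / 2) - ε)) + A * r ^ (-ε) / (2 * r) := by
        gcongr √r * ?_ + ?_ / (2 * r)
        exact hU.sqrt_mul_abs_le hε hA hr
    _ = 2 * A * (√r * r ^ (-(3 / 2) - ε)) + A / 2 * (r ^ (-ε) / r) := by ring
    _ = 5 / 2 * A * r ^ (-1 - ε) := by rw [hpow₁, hpow₂]; ring

end HasDecayingData

namespace IsRadialSolution

variable {U : ℝ → ℝ → ℝ} {ε A : ℝ}

theorem hasDerivAt_sqrt_mul_along_outgoing (hU : IsRadialSolution U) {c x : ℝ} (hx : 0 < c + x) :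
    HasDerivAt (fun s => √(c + s) * U s (c + s)) (outgoing U x (c + x)) x := by
  have hb : HasDerivAt (fun s => c + s) 1 x := (hasDerivAt_id x).const_add c
  refine ((hb.sqrt hx.ne').mul
    (hasDerivAt_along_curve (hU.differentiable _) (hasDerivAt_id x) hb)).congr_deriv ?_
  simp only [outgoing, id]
  ring

theorem hasDerivAt_outgoing_along_incoming (hU : IsRadialSolution U) {c x : ℝ} (hx : 0 < c - x) :
    HasDerivAt (fun s => outgoing U s (c - s))
      (√(c - x) * U x (c - x) * (1 / 4 - (√(c - x) * U x (c - x)) ^ 4) / (c - x) ^ 2) x := by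
  have hs : 0 < √(c - x) := Real.sqrt_pos.2 hx
  have hb : HasDerivAt (fun s => c - s) (-1) x := (hasDerivAt_id x).const_sub c
  have hsqrt := hb.sqrt hx.ne'
  have along {F : ℝ → ℝ → ℝ} (hF : Differentiable ℝ F.uncurry) :=
    hasDerivAt_along_curve (hF (x, c - x)) (hasDerivAt_id x) hb
  refine ((hsqrt.fun_mul ((along hU.differentiable_timeDeriv).fun_add
    (along hU.differentiable_radialDeriv))).fun_add
    ((along hU.differentiable).fun_div (hsqrt.const_mul 2) (by positivity))).congr_deriv ?_
  simp only [id, hU.equation x (c - x) hx, radialDeriv_timeDeriv_comm hU.contDiff]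
  have hsq : √(c - x) ^ 2 = c - x := Real.sq_sqrt hx.le
  generalize √(c - x) = s at *
  rw [← hsq]
  field_simp
  ring

end IsRadialSolution

/-- The antiderivative comes from the chord bound `1 / (1 + σ) ^ 2 ≤ 1 - 3 σ / 4` on `[0, 1]`,
with `σ = (v - 2 x) / v`. -/
theorem hasDerivAt_incomingMajorant {v x : ℝ} (hv : 0 < v) (hx : 2 * x < v) :
    HasDerivAt (fun s => -√(v - 2 * s) * (1 - (v - 2 * s) / (4 * v)))
      ((1 - 3 * (v - 2 * x) / (4 * v)) / √(v - 2 * x)) x := by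
  have hb : HasDerivAt (fun s => v - 2 * s) (-2) x := by
    simpa using ((hasDerivAt_id x).const_mul 2).const_sub v
  have hpos : 0 < v - 2 * x := by linarith
  have hs : 0 < √(v - 2 * x) := Real.sqrt_pos.2 hpos
  have hsq : √(v - 2 * x) ^ 2 = v - 2 * x := Real.sq_sqrt hpos.le
  refine ((hb.sqrt hpos.ne').fun_neg.fun_mul
    ((hb.div_const (4 * v)).const_sub 1)).congr_deriv ?_
  generalize √(v - 2 * x) = s at *
  rw [← hsq]
  field_simp
  ring

theorem one_div_sq_le_chord {v x : ℝ} (hv : 0 < v) (hx₀ : 0 ≤ x) (hx : 2 * x < v) :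
    1 / (4 * (v - x) ^ 2) ≤ (1 - 3 * (v - 2 * x) / (4 * v)) / v ^ 2 := by
  have hvx : 0 < v - x := by linarith
  have hpos : 0 ≤ x * (v - 2 * x) * (5 * v - 6 * x) := by
    apply mul_nonneg (mul_nonneg hx₀ _) <;> linarith
  rw [one_sub_div (by positivity), div_div, div_le_div_iff₀ (by positivity) (by positivity)]
  nlinarith

theorem abs_mul_quarter_sub_le {w : ℝ} (hw : |w| ≤ 1 / 2) : |w * (1 / 4 - w ^ 4)| ≤ |w| / 4 := by
  have hw4 : w ^ 4 ≤ 1 / 16 := by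
    have h := pow_le_pow_left₀ (abs_nonneg w) hw 4
    rw [Even.pow_abs (by decide)] at h
    linarith
  have hfactor : |1 / 4 - w ^ 4| ≤ 1 / 4 := by
    rw [abs_le]
    constructor <;> linarith [show 0 ≤ w ^ 4 by positivity]
  rw [abs_mul, div_eq_mul_one_div |w|]
  exact mul_le_mul_of_nonneg_left hfactor (abs_nonneg w)

theorem forall_pos_of_forall_lt_pos {X : Type*} [TopologicalSpace X] [T2Space X] {S : Set X}
    (hS : IsCompact S) {f τ : X → ℝ} (hf : ContinuousOn f S) (hτ : ContinuousOn τ S)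
    (step : ∀ z ∈ S, (∀ w ∈ S, τ w < τ z → 0 < f w) → 0 < f z) : ∀ z ∈ S, 0 < f z := by
  by_contra! hcon
  obtain ⟨z₀, hz₀, hfz₀⟩ := hcon
  have hbad : IsCompact (S ∩ f ⁻¹' Iic 0) :=
    hS.of_isClosed_subset (hf.preimage_isClosed_of_isClosed hS.isClosed isClosed_Iic)
      inter_subset_left
  obtain ⟨z, ⟨hzS, hfz⟩, hmin⟩ :=
    hbad.exists_isMinOn ⟨z₀, hz₀, hfz₀⟩ (hτ.mono inter_subset_left)
  refine (step z hzS fun w hw hlt => ?_).not_ge hfz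
  by_contra! hfw
  exact hlt.not_ge (hmin ⟨hw, hfw⟩)

/-- The set of points of the half plane `0 ≤ t` inside the backward characteristic triangle with
vertex `(t, r)`. -/
def backwardTriangle (t r : ℝ) : Set (ℝ × ℝ) :=
  {z | 0 ≤ z.1 ∧ r - t ≤ z.2 - z.1 ∧ z.2 + z.1 ≤ r + t}

theorem isCompact_backwardTriangle (t r : ℝ) : IsCompact (backwardTriangle t r) := by
  refine Metric.isCompact_of_isClosed_isBounded ?_
    ((Metric.isBounded_Icc ((0, r - t) : ℝ × ℝ) (t, r + t)).subset ?_)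
  · exact (isClosed_le continuous_const continuous_fst).inter
      ((isClosed_le continuous_const (continuous_snd.sub continuous_fst)).inter
        (isClosed_le (continuous_snd.add continuous_fst) continuous_const))
  · rintro ⟨s, x⟩ ⟨h₁, h₂, h₃⟩
    dsimp only at h₁ h₂ h₃
    exact ⟨⟨h₁, by dsimp only; linarith⟩, by dsimp only; linarith, by dsimp only; linarith⟩

/-- The pair of bounds on `√r U` which propagates forward in time outside the light cone. -/
def BootstrapBound (ε A : ℝ) (U : ℝ → ℝ → ℝ) (t r : ℝ) : Prop :=
  √r * |U t r| < 1 / 2 ∧ √(r - t) * (√r * |U t r|) < 28 * A * (r + t) ^ (1 / 2 - ε)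

namespace IsRadialSolution

variable {U : ℝ → ℝ → ℝ} {ε A R t r : ℝ}

theorem abs_outgoing_le_along_incoming (hU : IsRadialSolution U) {v M K : ℝ} (ht : 0 ≤ t)
    (htv : 2 * t < v) (hM : 0 ≤ M) (h₀ : |outgoing U 0 v| ≤ K)
    (hsmall : ∀ s ∈ Ico 0 t, √(v - s) * |U s (v - s)| ≤ 1 / 2)
    (hweighted : ∀ s ∈ Ico 0 t, √(v - 2 * s) * (√(v - s) * |U s (v - s)|) ≤ M * √v) :
    |outgoing U t (v - t)| ≤ K + 3 / 4 * (M / v) := by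
  have hv : 0 < v := by linarith
  have hsv : √v * √v = v := Real.mul_self_sqrt hv.le
  set B : ℝ → ℝ := fun s => -√(v - 2 * s) * (1 - (v - 2 * s) / (4 * v))
  have hB₀ : M * √v / v ^ 2 * B 0 = -(3 / 4 * (M / v)) := by
    simp only [B, mul_zero, sub_zero]
    field_simp
    linear_combination -3 * M * hsv
  have hBt : M * √v / v ^ 2 * B t ≤ 0 := by
    refine mul_nonpos_of_nonneg_of_nonpos (by positivity) ?_
    refine mul_nonpos_of_nonpos_of_nonneg (neg_nonpos.2 (Real.sqrt_nonneg _)) ?_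
    rw [sub_nonneg, div_le_one (by positivity)]
    linarith
  have hcmp : |outgoing U t (v - t)| ≤ M * √v / v ^ 2 * B t + (K + 3 / 4 * (M / v)) := by
    refine abs_le_of_abs_deriv_le ht (f := fun s => outgoing U s (v - s))
      (fun s hs => hU.hasDerivAt_outgoing_along_incoming (by linarith [hs.2])) ?_ ?_
      (fun s hs => ((hasDerivAt_incomingMajorant hv (by linarith [hs.2])).const_mul _).add_const _)
      fun s hs => ?_
    · change |outgoing U 0 (v - 0)| ≤ M * √v / v ^ 2 * B 0 + (K + 3 / 4 * (M / v))
      simpa only [hB₀, sub_zero, neg_add_cancel_comm_assoc] using h₀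
    · fun_prop
    · set w := √(v - s) * U s (v - s) with hw
      have hwabs : |w| = √(v - s) * |U s (v - s)| := by
        rw [hw, abs_mul, abs_of_nonneg (Real.sqrt_nonneg _)]
      have hpos : 0 < √(v - 2 * s) := Real.sqrt_pos.2 (by linarith [hs.2])
      have hw_le : |w| ≤ M * √v / √(v - 2 * s) := by
        rw [le_div_iff₀' hpos, hwabs]
        exact hweighted s hs
      calc |w * (1 / 4 - w ^ 4) / (v - s) ^ 2|
          ≤ |w| / 4 / (v - s) ^ 2 := by
            rw [abs_div, abs_of_nonneg (sq_nonneg (v - s))]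
            gcongr
            exact abs_mul_quarter_sub_le (hwabs.trans_le (hsmall s hs))
        _ = |w| * (1 / (4 * (v - s) ^ 2)) := by rw [div_div, mul_one_div]
        _ ≤ M * √v / √(v - 2 * s) * ((1 - 3 * (v - 2 * s) / (4 * v)) / v ^ 2) := by
            refine mul_le_mul hw_le (one_div_sq_le_chord hv hs.1 (by linarith [hs.2]))
              (by positivity) (by positivity)
        _ = M * √v / v ^ 2 * ((1 - 3 * (v - 2 * s) / (4 * v)) / √(v - 2 * s)) := by ring
  linarith

theorem sqrt_mul_abs_le_along_outgoing (hU : IsRadialSolution U) {u b D K : ℝ} (hb : b ≠ 0)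
    (ht : 0 ≤ t) (hu : 0 < u) (h₀ : √u * |U 0 u| ≤ D)
    (hout : ∀ s ∈ Ico 0 t, |outgoing U s (u + s)| ≤ K * (u + 2 * s) ^ (b - 1)) :
    √(u + t) * |U t (u + t)| ≤ D + K / (2 * b) * ((u + 2 * t) ^ b - u ^ b) := by
  have habs (s : ℝ) : |√(u + s) * U s (u + s)| = √(u + s) * |U s (u + s)| := by
    rw [abs_mul, abs_of_nonneg (Real.sqrt_nonneg _)]
  have hpow (s : ℝ) (hs : 0 ≤ s) :
      HasDerivAt (fun s => D + K / (2 * b) * ((u + 2 * s) ^ b - u ^ b))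
        (K * (u + 2 * s) ^ (b - 1)) s := by
    have hlin : HasDerivAt (fun s => u + 2 * s) 2 s := by
      simpa using ((hasDerivAt_id s).const_mul 2).const_add u
    refine ((((hlin.rpow_const (p := b) (Or.inl (by positivity))).sub_const _).const_mul
      (K / (2 * b))).const_add D).congr_deriv ?_
    field_simp
  rw [← habs]
  refine abs_le_of_abs_deriv_le ht
    (fun s hs => hU.hasDerivAt_sqrt_mul_along_outgoing (by linarith [hs.1])) ?_
    (fun s hs => (hpow s hs.1).continuousAt.continuousWithinAt) (fun s hs => hpow s hs.1) hout
  rw [habs]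
  simpa only [add_zero, mul_zero, sub_self] using h₀

/-- The boundary term is at most `5/2 A`, and the source contributes `3/4 * 28 A = 21 A`. -/
theorem abs_outgoing_le_of_bootstrapBound (hU : IsRadialSolution U)
    (hdata : HasDecayingData ε A U) (hε : 0 ≤ ε) (hA : 0 ≤ A) (ht : 0 ≤ t) (htr : t < r)
    (hboot : ∀ s ∈ Ico 0 t, BootstrapBound ε A U s (r + t - s)) :
    |outgoing U t r| ≤ 47 / 2 * A * (r + t) ^ (-1 - ε) := by
  have hv : 0 < r + t := by linarith
  have h := hU.abs_outgoing_le_along_incoming (v := r + t) (M := 28 * A * (r + t) ^ (-ε)) ht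
    (by linarith) (by positivity) (hdata.abs_outgoing_le hε hA hv)
    (fun s hs => (hboot s hs).1.le) fun s hs => by
      have hle := (hboot s hs).2.le
      rwa [sub_add_cancel, sub_sub, ← two_mul, sub_eq_neg_add (1 / 2), Real.rpow_add hv,
        ← Real.sqrt_eq_rpow, ← mul_assoc (28 * A)] at hle
  rw [add_sub_cancel_right] at h
  have hpow : (r + t) ^ (-1 - ε) = (r + t) ^ (-ε) / (r + t) := by
    rw [← Real.rpow_sub_one hv.ne']
    ring_nf
  refine h.trans_eq ?_
  rw [hpow]
  ring

theorem sqrt_mul_abs_le_of_abs_outgoing_le (hU : IsRadialSolution U)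
    (hdata : HasDecayingData ε A U) (hε : 0 < ε) (hA : 0 ≤ A) (ht : 0 ≤ t) (htr : t < r)
    (hout : ∀ s ∈ Ico 0 t,
      |outgoing U s (r - t + s)| ≤ 47 / 2 * A * (r - t + 2 * s) ^ (-1 - ε)) :
    √r * |U t r| ≤ (A + 47 / 4 * A / ε) * (r - t) ^ (-ε) := by
  have hu : 0 < r - t := by linarith
  have h := hU.sqrt_mul_abs_le_along_outgoing (neg_ne_zero.2 hε.ne') ht hu
    (hdata.sqrt_mul_abs_le hε.le hA hu) fun s hs => by
      rw [show -ε - 1 = -1 - ε by ring]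
      exact hout s hs
  rw [sub_add_cancel] at h
  have hdrop : 0 ≤ 47 / 4 * A / ε * (r - t + 2 * t) ^ (-ε) := by
    have := Real.rpow_nonneg (by linarith : 0 ≤ r - t + 2 * t) (-ε)
    positivity
  calc √r * |U t r| ≤ _ := h
    _ = (A + 47 / 4 * A / ε) * (r - t) ^ (-ε) - 47 / 4 * A / ε * (r - t + 2 * t) ^ (-ε) := by
      field_simp
      ring
    _ ≤ (A + 47 / 4 * A / ε) * (r - t) ^ (-ε) := sub_le_self _ hdrop

/-- The bootstrap closes because `47/2 / (1 - 2 ε) ≤ 47/2 * 8/7 < 28`. -/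
theorem sqrt_mul_sqrt_mul_abs_lt_of_abs_outgoing_le (hU : IsRadialSolution U)
    (hdata : HasDecayingData ε A U) (hε : 0 ≤ ε) (hε' : ε ≤ 1 / 16) (hA : 0 < A) (ht : 0 ≤ t)
    (htr : t < r)
    (hout : ∀ s ∈ Ico 0 t,
      |outgoing U s (r - t + s)| ≤ 47 / 2 * A * (r - t + 2 * s) ^ (-1 - ε)) :
    √(r - t) * (√r * |U t r|) < 28 * A * (r + t) ^ (1 / 2 - ε) := by
  have hu : 0 < r - t := by linarith
  have hsu : 0 < √(r - t) := Real.sqrt_pos.2 hu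
  have h := hU.sqrt_mul_abs_le_along_outgoing (b := 1 / 2 - ε) (K := 47 / 2 * A / √(r - t))
    (by linarith) ht hu (hdata.sqrt_mul_abs_le hε hA.le hu) fun s hs => (hout s hs).trans <| by
      have hus : 0 < r - t + 2 * s := by linarith [hs.1]
      have hsqrt : √(r - t) ≤ √(r - t + 2 * s) := Real.sqrt_le_sqrt (by linarith [hs.1])
      have : 0 < (r - t + 2 * s) ^ (-1 - ε) := Real.rpow_pos_of_pos hus _
      rw [show 1 / 2 - ε - 1 = 1 / 2 + (-1 - ε) by ring, Real.rpow_add hus, ← Real.sqrt_eq_rpow,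
        div_mul_eq_mul_div (47 / 2 * A), le_div_iff₀ hsu, mul_assoc (47 / 2 * A),
        mul_comm _ √(r - t)]
      gcongr
  rw [sub_add_cancel, show r - t + 2 * t = r + t by ring] at h
  have hpow_u : √(r - t) * (r - t) ^ (-ε) = (r - t) ^ (1 / 2 - ε) := by
    rw [Real.sqrt_eq_rpow, ← Real.rpow_add hu, ← sub_eq_add_neg]
  have hu_pow : 0 < (r - t) ^ (1 / 2 - ε) := Real.rpow_pos_of_pos hu _
  set κ := 1 / (1 - 2 * ε)
  have hκ : κ ≤ 8 / 7 := by
    rw [div_le_div_iff₀ (by linarith) (by norm_num)]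
    linarith
  have hκ₁ : 1 ≤ κ := by
    rw [one_le_div (by linarith)]
    linarith
  have hK : 47 / 2 * A / √(r - t) / (2 * (1 / 2 - ε)) = 47 / 2 * A * κ / √(r - t) := by
    simp only [κ]
    ring
  rw [hK] at h
  calc √(r - t) * (√r * |U t r|)
      ≤ _ := mul_le_mul_of_nonneg_left h hsu.le
    _ = A * (r - t) ^ (1 / 2 - ε)
          + 47 / 2 * A * κ * ((r + t) ^ (1 / 2 - ε) - (r - t) ^ (1 / 2 - ε)) := by
        rw [← hpow_u]
        field_simp
    _ ≤ 47 / 2 * A * κ * (r + t) ^ (1 / 2 - ε) := by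
        nlinarith [mul_le_mul_of_nonneg_right hκ₁ (mul_pos hA hu_pow).le, mul_pos hA hu_pow]
    _ < 28 * A * (r + t) ^ (1 / 2 - ε) := by
        refine mul_lt_mul_of_pos_right ?_ (Real.rpow_pos_of_pos (by linarith) _)
        linarith [mul_le_mul_of_nonneg_left hκ hA.le]

theorem bootstrapBound_of_forall_lt (hU : IsRadialSolution U) (hdata : HasDecayingData ε A U)
    (hε : 0 < ε) (hε' : ε ≤ 1 / 16) (hA : 0 < A) (hR : 0 < R)
    (hRsmall : (A + 47 / 4 * A / ε) * R ^ (-ε) < 1 / 2) (ht : 0 ≤ t) (hr : t + R ≤ r)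
    (hboot : ∀ z ∈ backwardTriangle t r, z.1 < t → BootstrapBound ε A U z.1 z.2) :
    BootstrapBound ε A U t r := by
  have hout (s : ℝ) (hs : s ∈ Ico 0 t) :
      |outgoing U s (r - t + s)| ≤ 47 / 2 * A * (r - t + 2 * s) ^ (-1 - ε) := by
    have h := hU.abs_outgoing_le_of_bootstrapBound hdata hε.le hA.le hs.1
      (by linarith : s < r - t + s) fun s' hs' =>
        hboot (s', r - t + s + s - s')
          ⟨hs'.1, by dsimp only; linarith [hs'.2], by dsimp only; linarith [hs.2]⟩
          (hs'.2.trans hs.2)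
    rwa [add_assoc, ← two_mul] at h
  refine ⟨(hU.sqrt_mul_abs_le_of_abs_outgoing_le hdata hε hA.le ht (by linarith) hout).trans_lt
    (lt_of_le_of_lt ?_ hRsmall),
    hU.sqrt_mul_sqrt_mul_abs_lt_of_abs_outgoing_le hdata hε.le hε' hA ht (by linarith) hout⟩
  exact mul_le_mul_of_nonneg_left
    (Real.rpow_le_rpow_of_nonpos hR (by linarith) (by linarith)) (by positivity)

theorem bootstrapBound (hU : IsRadialSolution U) (hdata : HasDecayingData ε A U)
    (hε : 0 < ε) (hε' : ε ≤ 1 / 16) (hA : 0 < A) (hR : 0 < R)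
    (hRsmall : (A + 47 / 4 * A / ε) * R ^ (-ε) < 1 / 2) (ht : 0 ≤ t) (hr : t + R ≤ r) :
    BootstrapBound ε A U t r := by
  have hUc : Continuous U.uncurry := hU.contDiff.continuous
  have hpow : ContinuousOn (fun z : ℝ × ℝ => (z.2 + z.1) ^ (1 / 2 - ε)) (backwardTriangle t r) :=
    ContinuousOn.rpow_const (by fun_prop) fun z _ => Or.inr (by linarith)
  have hslack := forall_pos_of_forall_lt_pos (isCompact_backwardTriangle t r) (τ := Prod.fst)
    (f := fun z => min (1 / 2 - √z.2 * |U z.1 z.2|)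
      (28 * A * (z.2 + z.1) ^ (1 / 2 - ε) - √(z.2 - z.1) * (√z.2 * |U z.1 z.2|)))
    (by fun_prop) continuousOn_fst fun z hz hlt => by
      obtain ⟨hz₀, hz₁, hz₂⟩ := hz
      simp only [lt_min_iff, sub_pos] at hlt ⊢
      exact hU.bootstrapBound_of_forall_lt hdata hε hε' hA hR hRsmall hz₀ (by linarith)
        fun w hw hwz => hlt w ⟨hw.1, hz₁.trans hw.2.1, hw.2.2.trans hz₂⟩ hwz
  simpa only [BootstrapBound, lt_min_iff, sub_pos] using hslack (t, r) ⟨ht, le_rfl, le_rfl⟩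

theorem abs_outgoing_le_of_exterior (hU : IsRadialSolution U) (hdata : HasDecayingData ε A U)
    (hε : 0 < ε) (hε' : ε ≤ 1 / 16) (hA : 0 < A) (hR : 0 < R)
    (hRsmall : (A + 47 / 4 * A / ε) * R ^ (-ε) < 1 / 2) (ht : 0 ≤ t) (hr : t + R ≤ r) :
    |outgoing U t r| ≤ 47 / 2 * A * (r + t) ^ (-1 - ε) :=
  hU.abs_outgoing_le_of_bootstrapBound hdata hε.le hA.le ht (by linarith) fun s hs =>
    hU.bootstrapBound hdata hε hε' hA hR hRsmall hs.1 (by linarith [hs.2])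

theorem sqrt_mul_abs_le_of_exterior (hU : IsRadialSolution U) (hdata : HasDecayingData ε A U)
    (hε : 0 < ε) (hε' : ε ≤ 1 / 16) (hA : 0 < A) (hR : 0 < R)
    (hRsmall : (A + 47 / 4 * A / ε) * R ^ (-ε) < 1 / 2) (ht : 0 ≤ t) (hr : t + R ≤ r) :
    √r * |U t r| ≤ (A + 47 / 4 * A / ε) * (r - t) ^ (-ε) :=
  hU.sqrt_mul_abs_le_of_abs_outgoing_le hdata hε hA.le ht (by linarith) fun s hs => by
    have h := hU.abs_outgoing_le_of_exterior hdata hε hε' hA hR hRsmall hs.1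
      (by linarith : s + R ≤ r - t + s)
    rwa [add_assoc, ← two_mul] at h

end IsRadialSolution

/-! ### The Morawetz-type estimate inside the light cone -/

theorem setIntegral_timeDeriv_add_radialDeriv {F G : ℝ → ℝ → ℝ} {a b : ℝ × ℝ} (hab : a ≤ b)
    (hF : ∀ z ∈ Icc a b, ContDiffAt ℝ 1 F.uncurry z)
    (hG : ∀ z ∈ Icc a b, ContDiffAt ℝ 1 G.uncurry z) :
    IntegrableOn (fun z => ∂ₜ F z.1 z.2 + ∂ᵣ G z.1 z.2) (Icc a b) ∧
    ∫ z in Icc a b, (∂ₜ F z.1 z.2 + ∂ᵣ G z.1 z.2) =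
      (∫ t in a.1..b.1, G t b.2) - (∫ t in a.1..b.1, G t a.2) +
        (∫ r in a.2..b.2, F b.1 r) - ∫ r in a.2..b.2, F a.1 r := by
  have hsub : ∀ z ∈ Ioo a.1 b.1 ×ˢ Ioo a.2 b.2, z ∈ Icc a b := fun z hz =>
    ⟨⟨hz.1.1.le, hz.2.1.le⟩, ⟨hz.1.2.le, hz.2.2.le⟩⟩
  have hcont : ContinuousOn (fun z => ∂ₜ F z.1 z.2 + ∂ᵣ G z.1 z.2) (Icc a b) := fun z hz =>
    ((contDiffAt_timeDeriv (n := 0) (hF z hz)).continuousAt.add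
      (contDiffAt_radialDeriv (n := 0) (hG z hz)).continuousAt).continuousWithinAt
  have hint : IntegrableOn (fun z => ∂ₜ F z.1 z.2 + ∂ᵣ G z.1 z.2) (Icc a b) :=
    hcont.integrableOn_compact isCompact_Icc
  refine ⟨hint, ?_⟩
  simpa using integral_divergence_prod_Icc_of_hasFDerivAt_of_le F.uncurry G.uncurry
    _ _ a b hab
    (fun z hz => (hF z hz).continuousAt.continuousWithinAt)
    (fun z hz => (hG z hz).continuousAt.continuousWithinAt)
    (fun z hz => hasFDerivAt_uncurry ((hF z (hsub z hz)).differentiableAt one_ne_zero))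
    (fun z hz => hasFDerivAt_uncurry ((hG z (hsub z hz)).differentiableAt one_ne_zero))
    (by simpa using hint)

/-- The part of the forward light cone of the origin between the times `R` and `S`. -/
def truncatedCone (R S : ℝ) : Set (ℝ × ℝ) := {z | z.1 ∈ Icc R S ∧ z.2 ∈ Icc 0 z.1}

theorem mul_mem_truncatedCone {R S : ℝ} (hR : 0 ≤ R) {z : ℝ × ℝ} (hz : z ∈ Icc (R, 0) (S, 1)) :
    (z.1, z.2 * z.1) ∈ truncatedCone R S := by
  obtain ⟨⟨h1, h2⟩, h3, h4⟩ := hz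
  simp only at h1 h2 h3 h4
  exact ⟨⟨h1, h3⟩, mul_nonneg h2 (hR.trans h1), mul_le_of_le_one_left (hR.trans h1) h4⟩

theorem setIntegral_mul_eq_integral_cone {f : ℝ → ℝ → ℝ} (hf : Continuous f.uncurry) {R S : ℝ}
    (hRS : R ≤ S) :
    ∫ z in Icc ((R, 0) : ℝ × ℝ) (S, 1), z.1 * f z.1 (z.2 * z.1) =
      ∫ s in R..S, ∫ r in (0)..s, f s r := by
  have hcont : Continuous fun z : ℝ × ℝ => z.1 * f z.1 (z.2 * z.1) :=
    continuous_fst.mul (hf.comp (by fun_prop : Continuous fun z : ℝ × ℝ => (z.1, z.2 * z.1)))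
  rw [← Icc_prod_Icc, Measure.volume_eq_prod, setIntegral_prod _
    (hcont.continuousOn.integrableOn_compact (isCompact_Icc.prod isCompact_Icc)),
    integral_Icc_eq_integral_Ioc, ← intervalIntegral.integral_of_le hRS]
  refine intervalIntegral.integral_congr fun s _ => ?_
  simp only
  rw [integral_Icc_eq_integral_Ioc, ← intervalIntegral.integral_of_le zero_le_one,
    intervalIntegral.integral_const_mul, intervalIntegral.mul_integral_comp_mul_right,
    zero_mul, one_mul]

theorem timeDeriv_add_radialDeriv_comp_mul {P Q : ℝ → ℝ → ℝ} {s x : ℝ}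
    (hP : DifferentiableAt ℝ P.uncurry (s, x * s)) (hQ : DifferentiableAt ℝ Q.uncurry (s, x * s)) :
    ∂ₜ (fun s x => s * P s (x * s)) s x + ∂ᵣ (fun s x => Q s (x * s) - x * P s (x * s)) s x =
      s * (∂ₜ P s (x * s) + ∂ᵣ Q s (x * s)) := by
  have hmul : HasDerivAt (fun x => x * s) s x := hasDerivAt_mul_const s
  have hF := (hasDerivAt_id' s).fun_mul
    (hasDerivAt_along_curve hP (hasDerivAt_id' s) (hasDerivAt_const_mul x))
  have hG := (hasDerivAt_along_curve hQ (hasDerivAt_const x s) hmul).fun_sub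
    ((hasDerivAt_id' x).fun_mul (hasDerivAt_along_curve hP (hasDerivAt_const x s) hmul))
  rw [timeDeriv, radialDeriv, hF.deriv, hG.deriv]
  ring

-- The substitution `r = x * s` straightens the cone to a rectangle.
theorem integral_cone_le_of_le_neg_divergence {P Q f : ℝ → ℝ → ℝ} {R S : ℝ} (hR : 0 < R)
    (hRS : R ≤ S) (hP : ∀ z ∈ truncatedCone R S, ContDiffAt ℝ 1 P.uncurry z)
    (hQ : ∀ z ∈ truncatedCone R S, ContDiffAt ℝ 1 Q.uncurry z) (hf : Continuous f.uncurry)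
    (hdiv : ∀ s ∈ Icc R S, ∀ r ∈ Ioc 0 s, f s r ≤ -(∂ₜ P s r + ∂ᵣ Q s r)) :
    ∫ s in R..S, ∫ r in (0)..s, f s r ≤
      -(∫ s in R..S, (Q s s - P s s)) + (∫ s in R..S, Q s 0) - (∫ r in (0)..S, P S r) +
        ∫ r in (0)..R, P R r := by
  set F : ℝ → ℝ → ℝ := fun s x => s * P s (x * s)
  set G : ℝ → ℝ → ℝ := fun s x => Q s (x * s) - x * P s (x * s)
  have hmem : ∀ z ∈ Icc ((R, 0) : ℝ × ℝ) (S, 1), (z.1, z.2 * z.1) ∈ truncatedCone R S :=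
    fun z => mul_mem_truncatedCone hR.le
  have hcomp : ∀ {H : ℝ → ℝ → ℝ}, (∀ z ∈ truncatedCone R S, ContDiffAt ℝ 1 H.uncurry z) →
      ∀ z ∈ Icc ((R, 0) : ℝ × ℝ) (S, 1), ContDiffAt ℝ 1 (fun w => H w.1 (w.2 * w.1)) z :=
    fun hH z hz => (hH _ (hmem z hz)).comp (f := fun w : ℝ × ℝ => (w.1, w.2 * w.1)) z (by fun_prop)
  obtain ⟨hint, hdivergence⟩ := setIntegral_timeDeriv_add_radialDeriv
    (F := F) (G := G) (show ((R, 0) : ℝ × ℝ) ≤ (S, 1) from ⟨hRS, zero_le_one⟩)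
    (fun z hz => contDiffAt_fst.mul (hcomp hP z hz))
    (fun z hz => (hcomp hQ z hz).sub (contDiffAt_snd.mul (hcomp hP z hz)))
  have hle : ∫ z in Icc ((R, 0) : ℝ × ℝ) (S, 1), z.1 * f z.1 (z.2 * z.1) ≤
      ∫ z in Icc ((R, 0) : ℝ × ℝ) (S, 1), -(∂ₜ F z.1 z.2 + ∂ᵣ G z.1 z.2) := by
    refine setIntegral_mono_on_ae ?_ hint.neg measurableSet_Icc ?_
    · exact (continuous_fst.mul (hf.comp (by fun_prop : Continuous fun z : ℝ × ℝ =>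
        (z.1, z.2 * z.1)))).continuousOn.integrableOn_compact isCompact_Icc
    · have hsnd : ∀ᵐ z : ℝ × ℝ, z.2 ≠ 0 :=
        Measure.quasiMeasurePreserving_snd.ae (Measure.ae_ne volume 0)
      filter_upwards [hsnd] with z hz hmemz
      have hz₁ : 0 < z.1 := hR.trans_le hmemz.1.1
      have hz₂ : 0 < z.2 * z.1 := mul_pos (lt_of_le_of_ne hmemz.1.2 hz.symm) hz₁
      rw [timeDeriv_add_radialDeriv_comp_mul ((hP _ (hmem z hmemz)).differentiableAt one_ne_zero)
        ((hQ _ (hmem z hmemz)).differentiableAt one_ne_zero), ← mul_neg]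
      exact mul_le_mul_of_nonneg_left
        (hdiv _ (hmem z hmemz).1 _ ⟨hz₂, (hmem z hmemz).2.2⟩) hz₁.le
  rw [setIntegral_mul_eq_integral_cone hf hRS, integral_neg, hdivergence] at hle
  simp only [F, G, one_mul, zero_mul, sub_zero, intervalIntegral.integral_const_mul,
    intervalIntegral.mul_integral_comp_mul_right] at hle
  linarith

/-- The hyperbolic distance in Minkowski space of an event at time `s` and radius `r` from the
event at time `-1` and radius `0`. -/
noncomputable def properTime (s r : ℝ) : ℝ := √((s + 1) ^ 2 - r ^ 2)

/-- The coefficient of `∂ₜ` in the Morawetz multiplier. -/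
noncomputable def timeWeight (s r : ℝ) : ℝ := 2 * (s + 1) - properTime s r

/-- The coefficient of `∂ᵣ` in the Morawetz multiplier, multiplied by the area factor `r`. -/
noncomputable def radialWeight (s r : ℝ) : ℝ := r ^ 2 + (s + 1) ^ 2 - (s + 1) * properTime s r

/-- The density, with the area factor `r`, obtained from the Morawetz multiplier
`y ∂ₜ + (Z / r) ∂ᵣ + 1`, where `y` is `timeWeight` and `Z` is `radialWeight`. -/
noncomputable def morawetzDensity (U : ℝ → ℝ → ℝ) (s r : ℝ) : ℝ :=
  r * (timeWeight s r * ((∂ₜ U s r ^ 2 + ∂ᵣ U s r ^ 2) / 2 + U s r ^ 6 / 6) + U s r * ∂ₜ U s r) +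
    radialWeight s r * (∂ₜ U s r * ∂ᵣ U s r)

/-- The radial flux, with the area factor `r`, that accompanies `morawetzDensity`. -/
noncomputable def morawetzFlux (U : ℝ → ℝ → ℝ) (s r : ℝ) : ℝ :=
  -(r * (timeWeight s r * (∂ₜ U s r * ∂ᵣ U s r) + U s r * ∂ᵣ U s r)) -
    radialWeight s r * ((∂ₜ U s r ^ 2 + ∂ᵣ U s r ^ 2) / 2 - U s r ^ 6 / 6)

section Weights

variable {s r : ℝ} (hr : 0 ≤ r) (hrs : r ≤ s)

include hr hrs

theorem sq_lt_sq_add_one : r ^ 2 < (s + 1) ^ 2 := by gcongr; linarith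

theorem properTime_pos : 0 < properTime s r :=
  Real.sqrt_pos.2 (sub_pos.2 (sq_lt_sq_add_one hr hrs))

theorem sq_properTime : properTime s r ^ 2 = (s + 1) ^ 2 - r ^ 2 :=
  Real.sq_sqrt (sub_pos.2 (sq_lt_sq_add_one hr hrs)).le

theorem properTime_le : properTime s r ≤ s + 1 :=
  Real.sqrt_le_iff.2 ⟨by linarith, sub_le_self _ (sq_nonneg r)⟩

theorem sub_le_properTime : s + 1 - r ≤ properTime s r :=
  Real.le_sqrt_of_sq_le (by nlinarith)

theorem timeWeight_pos : 0 < timeWeight s r := by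
  have := properTime_le hr hrs
  rw [timeWeight]
  linarith

theorem radialWeight_nonneg : 0 ≤ radialWeight s r := by
  rw [radialWeight]
  nlinarith [properTime_le hr hrs]

theorem radialWeight_le : radialWeight s r ≤ r * timeWeight s r := by
  rw [radialWeight, timeWeight]
  nlinarith [sub_le_properTime hr hrs]

theorem hasDerivAt_properTime_time :
    HasDerivAt (fun s => properTime s r) ((s + 1) / properTime s r) s := by
  have h : HasDerivAt (fun s => (s + 1) ^ 2 - r ^ 2) (2 * (s + 1)) s := by
    simpa using (((hasDerivAt_id' s).add_const 1).fun_pow 2).sub_const (r ^ 2)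
  exact (h.sqrt (sub_pos.2 (sq_lt_sq_add_one hr hrs)).ne').congr_deriv
    (mul_div_mul_left _ _ two_ne_zero)

theorem hasDerivAt_properTime_radius :
    HasDerivAt (properTime s) (-(r / properTime s r)) r := by
  have h : HasDerivAt (fun r => (s + 1) ^ 2 - r ^ 2) (2 * -r) r := by
    simpa using ((hasDerivAt_id' r).fun_pow 2).const_sub ((s + 1) ^ 2)
  exact (h.sqrt (sub_pos.2 (sq_lt_sq_add_one hr hrs)).ne').congr_deriv
    ((mul_div_mul_left _ _ two_ne_zero).trans (neg_div _ _))

theorem hasDerivAt_timeWeight_time :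
    HasDerivAt (fun s => timeWeight s r) (2 - (s + 1) / properTime s r) s :=
  ((((hasDerivAt_id' s).add_const 1).const_mul 2).fun_sub
    (hasDerivAt_properTime_time hr hrs)).congr_deriv (by rw [mul_one])

theorem hasDerivAt_timeWeight_radius : HasDerivAt (timeWeight s) (r / properTime s r) r :=
  ((hasDerivAt_properTime_radius hr hrs).const_sub (2 * (s + 1))).congr_deriv (neg_neg _)

theorem hasDerivAt_radialWeight_time :
    HasDerivAt (fun s => radialWeight s r)
      (timeWeight s r - (s + 1) * ((s + 1) / properTime s r)) s := by
  have h : HasDerivAt (fun s : ℝ => s + 1) 1 s := (hasDerivAt_id' s).add_const 1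
  refine (((h.fun_pow 2).const_add (r ^ 2)).fun_sub
    (h.fun_mul (hasDerivAt_properTime_time hr hrs))).congr_deriv ?_
  simp only [timeWeight, Nat.cast_ofNat, Nat.add_one_sub_one, pow_one, mul_one, one_mul]
  ring

theorem hasDerivAt_radialWeight_radius :
    HasDerivAt (radialWeight s) (2 * r + (s + 1) * (r / properTime s r)) r := by
  refine ((((hasDerivAt_id' r).fun_pow 2).add_const ((s + 1) ^ 2)).fun_sub
    ((hasDerivAt_properTime_radius hr hrs).const_mul (s + 1))).congr_deriv ?_
  simp

theorem contDiffAt_properTime : ContDiffAt ℝ 1 properTime.uncurry (s, r) :=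
  ContDiffAt.sqrt (f := fun z : ℝ × ℝ => (z.1 + 1) ^ 2 - z.2 ^ 2) (by fun_prop)
    (sub_pos.2 (sq_lt_sq_add_one hr hrs)).ne'

end Weights

@[fun_prop]
theorem continuous_properTime : Continuous properTime.uncurry := by
  unfold properTime
  fun_prop

@[fun_prop]
theorem continuous_timeWeight : Continuous timeWeight.uncurry := by
  unfold timeWeight
  fun_prop

@[fun_prop]
theorem continuous_radialWeight : Continuous radialWeight.uncurry := by
  unfold radialWeight
  fun_prop

theorem radialWeight_zero {s : ℝ} (hs : 0 ≤ s) : radialWeight s 0 = 0 :=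
  le_antisymm (by simpa using radialWeight_le le_rfl hs) (radialWeight_nonneg le_rfl hs)

theorem morawetzFlux_zero (U : ℝ → ℝ → ℝ) {s : ℝ} (hs : 0 ≤ s) : morawetzFlux U s 0 = 0 := by
  simp [morawetzFlux, radialWeight_zero hs]

namespace IsRadialSolution

variable {U : ℝ → ℝ → ℝ} {s r : ℝ}

theorem continuous_morawetzDensity (hU : IsRadialSolution U) :
    Continuous (morawetzDensity U).uncurry := by
  have h₀ := hU.contDiff.continuous
  have h₁ := hU.contDiff_timeDeriv.continuous
  have h₂ := hU.contDiff_radialDeriv.continuous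
  unfold morawetzDensity
  fun_prop

theorem continuous_morawetzFlux (hU : IsRadialSolution U) :
    Continuous (morawetzFlux U).uncurry := by
  have h₀ := hU.contDiff.continuous
  have h₁ := hU.contDiff_timeDeriv.continuous
  have h₂ := hU.contDiff_radialDeriv.continuous
  unfold morawetzFlux
  fun_prop

theorem contDiffAt_morawetzDensity (hU : IsRadialSolution U) (hr : 0 ≤ r) (hrs : r ≤ s) :
    ContDiffAt ℝ 1 (morawetzDensity U).uncurry (s, r) := by
  have h₀ : ContDiff ℝ 1 U.uncurry := hU.contDiff.of_le one_le_two
  have h₁ := hU.contDiff_timeDeriv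
  have h₂ := hU.contDiff_radialDeriv
  have h₃ := contDiffAt_properTime hr hrs
  unfold morawetzDensity timeWeight radialWeight
  fun_prop

theorem contDiffAt_morawetzFlux (hU : IsRadialSolution U) (hr : 0 ≤ r) (hrs : r ≤ s) :
    ContDiffAt ℝ 1 (morawetzFlux U).uncurry (s, r) := by
  have h₀ : ContDiff ℝ 1 U.uncurry := hU.contDiff.of_le one_le_two
  have h₁ := hU.contDiff_timeDeriv
  have h₂ := hU.contDiff_radialDeriv
  have h₃ := contDiffAt_properTime hr hrs
  unfold morawetzFlux timeWeight radialWeight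
  fun_prop

theorem timeDeriv_morawetzDensity (hU : IsRadialSolution U) (hr : 0 ≤ r) (hrs : r ≤ s) :
    ∂ₜ (morawetzDensity U) s r =
      r * ((2 - (s + 1) / properTime s r) * ((∂ₜ U s r ^ 2 + ∂ᵣ U s r ^ 2) / 2 + U s r ^ 6 / 6) +
        timeWeight s r * (∂ₜ U s r * ∂ₜ (∂ₜ U) s r + ∂ᵣ U s r * ∂ₜ (∂ᵣ U) s r +
          U s r ^ 5 * ∂ₜ U s r) + ∂ₜ U s r ^ 2 + U s r * ∂ₜ (∂ₜ U) s r) +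
      (timeWeight s r - (s + 1) * ((s + 1) / properTime s r)) * (∂ₜ U s r * ∂ᵣ U s r) +
      radialWeight s r * (∂ₜ (∂ₜ U) s r * ∂ᵣ U s r + ∂ₜ U s r * ∂ₜ (∂ᵣ U) s r) := by
  have hu := hasDerivAt_timeDeriv (hU.differentiable (s, r))
  have ha := hasDerivAt_timeDeriv (hU.differentiable_timeDeriv (s, r))
  have hb := hasDerivAt_timeDeriv (hU.differentiable_radialDeriv (s, r))
  have h := (((hasDerivAt_timeWeight_time hr hrs).fun_mul
    ((((ha.fun_pow 2).fun_add (hb.fun_pow 2)).div_const 2).fun_add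
      ((hu.fun_pow 6).div_const 6))).fun_add (hu.fun_mul ha)).const_mul r |>.fun_add
    ((hasDerivAt_radialWeight_time hr hrs).fun_mul (ha.fun_mul hb))
  refine h.deriv.trans ?_
  simp only [Nat.cast_ofNat, Nat.add_one_sub_one, pow_one]
  ring

theorem radialDeriv_morawetzFlux (hU : IsRadialSolution U) (hr : 0 ≤ r) (hrs : r ≤ s) :
    ∂ᵣ (morawetzFlux U) s r =
      -(timeWeight s r * (∂ₜ U s r * ∂ᵣ U s r) + U s r * ∂ᵣ U s r) -
      r * (r / properTime s r * (∂ₜ U s r * ∂ᵣ U s r) +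
        timeWeight s r * (∂ᵣ (∂ₜ U) s r * ∂ᵣ U s r + ∂ₜ U s r * ∂ᵣ (∂ᵣ U) s r) +
        ∂ᵣ U s r ^ 2 + U s r * ∂ᵣ (∂ᵣ U) s r) -
      (2 * r + (s + 1) * (r / properTime s r)) *
        ((∂ₜ U s r ^ 2 + ∂ᵣ U s r ^ 2) / 2 - U s r ^ 6 / 6) -
      radialWeight s r * (∂ₜ U s r * ∂ᵣ (∂ₜ U) s r + ∂ᵣ U s r * ∂ᵣ (∂ᵣ U) s r -
        U s r ^ 5 * ∂ᵣ U s r) := by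
  have hu := hasDerivAt_radialDeriv (hU.differentiable (s, r))
  have ha := hasDerivAt_radialDeriv (hU.differentiable_timeDeriv (s, r))
  have hb := hasDerivAt_radialDeriv (hU.differentiable_radialDeriv (s, r))
  have h := ((hasDerivAt_id' r).fun_mul (((hasDerivAt_timeWeight_radius hr hrs).fun_mul
    (ha.fun_mul hb)).fun_add (hu.fun_mul hb))).fun_neg.fun_sub
    ((hasDerivAt_radialWeight_radius hr hrs).fun_mul
      ((((ha.fun_pow 2).fun_add (hb.fun_pow 2)).div_const 2).fun_sub ((hu.fun_pow 6).div_const 6)))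
  refine h.deriv.trans ?_
  simp only [Nat.cast_ofNat, Nat.add_one_sub_one, pow_one]
  ring

theorem timeDeriv_morawetzDensity_add_radialDeriv_morawetzFlux (hU : IsRadialSolution U)
    (hr : 0 < r) (hrs : r ≤ s) :
    ∂ₜ (morawetzDensity U) s r + ∂ᵣ (morawetzFlux U) s r =
      -(r * U s r ^ 6 / 3) - r * (r * ∂ₜ U s r + (s + 1) * ∂ᵣ U s r) ^ 2 /
        (properTime s r * (properTime s r + (s + 1))) := by
  have hτ := properTime_pos hr.le hrs
  have hr2 : r ^ 2 = (s + 1) ^ 2 - properTime s r ^ 2 := by linarith [sq_properTime hr.le hrs]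
  have hs : properTime s r + (s + 1) ≠ 0 := by linarith
  rw [hU.timeDeriv_morawetzDensity hr.le hrs, hU.radialDeriv_morawetzFlux hr.le hrs,
    radialDeriv_timeDeriv_comm hU.contDiff, hU.equation s r hr, timeWeight, radialWeight]
  generalize properTime s r = τ at *
  generalize s + 1 = σ at *
  generalize U s r = u, ∂ₜ U s r = a, ∂ᵣ U s r = b, ∂ₜ (∂ᵣ U) s r = c, ∂ᵣ (∂ᵣ U) s r = d
  field_simp
  linear_combination (36 * r ^ 2 * a ^ 2 - 36 * σ * τ * b ^ 2 + 36 * r * (σ - τ) * a * b) * hr2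

theorem le_neg_morawetz_divergence (hU : IsRadialSolution U) (hr : 0 < r) (hrs : r ≤ s) :
    r * U s r ^ 6 / 3 ≤ -(∂ₜ (morawetzDensity U) s r + ∂ᵣ (morawetzFlux U) s r) := by
  have hτ := properTime_pos hr.le hrs
  have hs : 0 < s + 1 := by linarith
  have hnonneg : 0 ≤ r * (r * ∂ₜ U s r + (s + 1) * ∂ᵣ U s r) ^ 2 /
      (properTime s r * (properTime s r + (s + 1))) := by positivity
  rw [hU.timeDeriv_morawetzDensity_add_radialDeriv_morawetzFlux hr hrs]
  linarith

theorem integral_cone_le_boundary (hU : IsRadialSolution U) {R S : ℝ} (hR : 0 < R) (hRS : R ≤ S) :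
    ∫ s in R..S, ∫ r in (0)..s, r * U s r ^ 6 / 3 ≤
      (∫ s in R..S, (morawetzDensity U s s - morawetzFlux U s s)) -
        (∫ r in (0)..S, morawetzDensity U S r) + ∫ r in (0)..R, morawetzDensity U R r := by
  have h₀ := hU.contDiff.continuous
  have hzero : ∫ s in R..S, morawetzFlux U s 0 = 0 :=
    intervalIntegral.integral_zero_ae (.of_forall fun s hs =>
      morawetzFlux_zero U (hR.le.trans ((uIoc_of_le hRS ▸ hs).1.le)))
  have h := integral_cone_le_of_le_neg_divergence hR hRS
    (fun z hz => hU.contDiffAt_morawetzDensity hz.2.1 hz.2.2)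
    (fun z hz => hU.contDiffAt_morawetzFlux hz.2.1 hz.2.2)
    (f := fun s r => r * U s r ^ 6 / 3) (by fun_prop)
    (fun s _ r hr => hU.le_neg_morawetz_divergence hr.1 hr.2)
  simpa only [hzero, add_zero, ← intervalIntegral.integral_neg, neg_sub] using h

end IsRadialSolution

theorem neg_le_morawetz_quadratic_form {r σ y Z : ℝ} (hr : 0 < r) (hσ : 0 < σ) (hσy : σ ≤ y)
    (hZ₀ : 0 ≤ Z) (hZ : Z ≤ r * y) (u a b : ℝ) :
    -(r * (y + 2 * σ) * u ^ 2 / (2 * y ^ 2) + Z * u * b / y) ≤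
      r * (y * ((a ^ 2 + b ^ 2) / 2 + u ^ 6 / 6) + u * a) + Z * (a * b) := by
  have hy : 0 < y := hσ.trans_le hσy
  obtain ⟨z, rfl⟩ : ∃ z, Z = r * z := ⟨Z / r, (mul_div_cancel₀ Z hr.ne').symm⟩
  have hz₀ : 0 ≤ z := nonneg_of_mul_nonneg_right hZ₀ hr
  have hz : 0 ≤ y - z := sub_nonneg.2 (le_of_mul_le_mul_left hZ hr)
  have hsquare : r * (y * ((a ^ 2 + b ^ 2) / 2 + u ^ 6 / 6) + u * a) + r * z * (a * b) +
      (r * (y + 2 * σ) * u ^ 2 / (2 * y ^ 2) + r * z * u * b / y) =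
      r * (y / 2 * (a + (z * b + u) / y) ^ 2 + (y - z) * (y + z) * b ^ 2 / (2 * y) +
        u ^ 2 * σ / y ^ 2 + y * u ^ 6 / 6) := by
    field_simp
    ring
  have hnonneg : 0 ≤ r * (y / 2 * (a + (z * b + u) / y) ^ 2 +
      (y - z) * (y + z) * b ^ 2 / (2 * y) + u ^ 2 * σ / y ^ 2 + y * u ^ 6 / 6) := by positivity
  linarith

theorem mul_le_sq_of_abs_le {a b A : ℝ} (ha : |a| ≤ A) (hb : |b| ≤ A) : a * b ≤ A ^ 2 :=
  calc a * b ≤ |a| * |b| := (le_abs_self _).trans_eq (abs_mul a b)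
    _ ≤ A * A := by gcongr; exact (abs_nonneg a).trans ha
    _ = A ^ 2 := (sq A).symm

theorem coneFlux_identity {r w : ℝ} (hw : 0 < w) (hwr : w ^ 2 = r) (M τ u g : ℝ) :
    M / 2 * g ^ 2 + (τ - 1) * u ^ 6 / 6 + r * (u * g) =
      M / (2 * r) * (w * g + u / (2 * w)) ^ 2 +
        w * u * (w * g + u / (2 * w)) * (1 - M / (2 * r ^ 2)) +
        (w * u) ^ 2 * (M - 4 * r ^ 2) / (8 * r ^ 3) + (τ - 1) * (w * u) ^ 6 / (6 * r ^ 3) := by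
  rw [← hwr]
  field_simp
  ring

theorem coneFlux_le {r τ l ω C δ M : ℝ} (hr : 1 ≤ r) (hM₀ : 0 ≤ M) (hM : M ≤ 9 * r ^ 2)
    (hM' : M - 4 * r ^ 2 ≤ 2 * r) (hτr : τ - 1 ≤ 2 * r) (hC : 0 ≤ C)
    (hδ : 1 / r ^ 2 ≤ δ) (hδr : r * δ ≤ 1) (hl : |l| ≤ C * δ) (hω : |ω| ≤ 1 / 2) :
    M / (2 * r) * l ^ 2 + ω * l * (1 - M / (2 * r ^ 2)) + ω ^ 2 * (M - 4 * r ^ 2) / (8 * r ^ 3) +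
      (τ - 1) * ω ^ 6 / (6 * r ^ 3) ≤ (9 / 2 * C ^ 2 + 2 * C + 1) * δ := by
  have : 0 < r := by linarith
  have hinv : 0 < 1 / r ^ 2 := by positivity
  have hδ₀ : 0 < δ := hinv.trans_le hδ
  have hsq : M / (2 * r) * l ^ 2 ≤ 9 / 2 * C ^ 2 * δ := by
    have hl2 : l ^ 2 ≤ (C * δ) ^ 2 := sq_le_sq' (abs_le.1 hl).1 (abs_le.1 hl).2
    have hMr : M / (2 * r) ≤ 9 / 2 * r := by rw [div_le_iff₀ (by positivity)]; linarith
    calc M / (2 * r) * l ^ 2 ≤ 9 / 2 * r * (C * δ) ^ 2 := by gcongr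
      _ = 9 / 2 * C ^ 2 * δ * (r * δ) := by ring
      _ ≤ 9 / 2 * C ^ 2 * δ * 1 := by gcongr
      _ = 9 / 2 * C ^ 2 * δ := mul_one _
  have hcross : ω * l * (1 - M / (2 * r ^ 2)) ≤ 2 * C * δ := by
    have hMr : M / (2 * r ^ 2) ≤ 9 / 2 := by rw [div_le_iff₀ (by positivity)]; linarith
    have hMr₀ : 0 ≤ M / (2 * r ^ 2) := by positivity
    have habs : |1 - M / (2 * r ^ 2)| ≤ 4 := abs_le.2 ⟨by linarith, by linarith⟩
    calc ω * l * (1 - M / (2 * r ^ 2)) ≤ |ω| * |l| * |1 - M / (2 * r ^ 2)| :=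
          (le_abs_self _).trans_eq (by rw [abs_mul, abs_mul])
      _ ≤ 1 / 2 * (C * δ) * 4 := by gcongr
      _ = 2 * C * δ := by ring
  have hω2 : ω ^ 2 ≤ 1 / 4 := by
    simpa only [sq_abs, show (1 / 2 : ℝ) ^ 2 = 1 / 4 by norm_num] using
      pow_le_pow_left₀ (abs_nonneg ω) hω 2
  have hω6 : ω ^ 6 ≤ 1 := by
    rw [show ω ^ 6 = (ω ^ 2) ^ 3 by ring]
    exact pow_le_one₀ (sq_nonneg _) (by linarith)
  have hlower : ω ^ 2 * (M - 4 * r ^ 2) / (8 * r ^ 3) ≤ 1 / 16 * (1 / r ^ 2) := by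
    calc ω ^ 2 * (M - 4 * r ^ 2) / (8 * r ^ 3) ≤ ω ^ 2 * (2 * r) / (8 * r ^ 3) := by gcongr
      _ ≤ 1 / 4 * (2 * r) / (8 * r ^ 3) := by gcongr
      _ = 1 / 16 * (1 / r ^ 2) := by field_simp; norm_num
  have hsextic : (τ - 1) * ω ^ 6 / (6 * r ^ 3) ≤ 1 / 3 * (1 / r ^ 2) := by
    calc (τ - 1) * ω ^ 6 / (6 * r ^ 3) ≤ 2 * r * 1 / (6 * r ^ 3) := by gcongr
      _ = 1 / 3 * (1 / r ^ 2) := by field_simp; norm_num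
  linarith

namespace IsRadialSolution

variable {U : ℝ → ℝ → ℝ} {R S s r : ℝ}

theorem hasDerivAt_radialWeight_mul_sq_div (hU : IsRadialSolution U) (hr : 0 ≤ r) (hrs : r ≤ s) :
    HasDerivAt (fun r => -(radialWeight s r * U s r ^ 2 / (2 * timeWeight s r)))
      (-(r * (timeWeight s r + 2 * (s + 1)) * U s r ^ 2 / (2 * timeWeight s r ^ 2) +
        radialWeight s r * U s r * ∂ᵣ U s r / timeWeight s r)) r := by
  have hτ := (properTime_pos hr hrs).ne'
  have hy := (timeWeight_pos hr hrs).ne'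
  have hr2 : r ^ 2 = (s + 1) ^ 2 - properTime s r ^ 2 := by linarith [sq_properTime hr hrs]
  have hu := hasDerivAt_radialDeriv (hU.differentiable (s, r))
  have h := ((hasDerivAt_radialWeight_radius hr hrs).fun_mul (hu.fun_pow 2)).fun_div
    ((hasDerivAt_timeWeight_radius hr hrs).const_mul 2) (mul_ne_zero two_ne_zero hy) |>.fun_neg
  refine h.congr_deriv ?_
  simp only [Nat.cast_ofNat, Nat.add_one_sub_one, pow_one, radialWeight, hr2]
  rw [timeWeight] at *
  field_simp
  ring

theorem neg_one_div_eight_le_integral_morawetzDensity (hU : IsRadialSolution U) (hS : 0 < S)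
    (hb : √S * |U S S| ≤ 1 / 2) : -(1 / 8) ≤ ∫ r in (0)..S, morawetzDensity U S r := by
  have hderiv : ∀ r ∈ Icc 0 S, HasDerivAt _ _ r := fun r hr =>
    hU.hasDerivAt_radialWeight_mul_sq_div hr.1 hr.2
  have hprimitive := intervalIntegral.sub_le_integral_of_hasDeriv_right_of_le hS.le
    (fun r hr => (hderiv r hr).continuousAt.continuousWithinAt)
    (fun r hr => (hderiv r (Ioo_subset_Icc_self hr)).hasDerivWithinAt)
    (φ := morawetzDensity U S)
    (hU.continuous_morawetzDensity.uncurry_left S).integrableOn_Icc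
    (fun r hr => neg_le_morawetz_quadratic_form hr.1 (by linarith)
      (by have := properTime_le hr.1.le hr.2.le; rw [timeWeight]; linarith)
      (radialWeight_nonneg hr.1.le hr.2.le) (radialWeight_le hr.1.le hr.2.le) _ _ _)
  have hy := timeWeight_pos hS.le le_rfl
  have hu : S * U S S ^ 2 ≤ 1 / 4 := by
    calc S * U S S ^ 2 = (√S * |U S S|) ^ 2 := by rw [mul_pow, Real.sq_sqrt hS.le, sq_abs]
      _ ≤ (1 / 2) ^ 2 := by gcongr
      _ = 1 / 4 := by norm_num
  have hend : radialWeight S S * U S S ^ 2 / (2 * timeWeight S S) ≤ 1 / 8 := by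
    rw [div_le_iff₀ (by positivity)]
    calc radialWeight S S * U S S ^ 2 ≤ S * timeWeight S S * U S S ^ 2 := by
          gcongr; exact radialWeight_le hS.le le_rfl
      _ = S * U S S ^ 2 * timeWeight S S := by ring
      _ ≤ 1 / 4 * timeWeight S S := by gcongr
      _ = 1 / 8 * (2 * timeWeight S S) := by ring
  simp only [radialWeight_zero hS.le, zero_mul, zero_div, neg_zero, sub_zero] at hprimitive
  linarith

theorem morawetzDensity_sub_morawetzFlux_cone (U : ℝ → ℝ → ℝ) (r : ℝ) :
    morawetzDensity U r r - morawetzFlux U r r =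
      ((2 * r + 1) ^ 2 - (2 * r + 1) * properTime r r) / 2 * (∂ₜ U r r + ∂ᵣ U r r) ^ 2 +
        (properTime r r - 1) * U r r ^ 6 / 6 + r * (U r r * (∂ₜ U r r + ∂ᵣ U r r)) := by
  rw [morawetzDensity, morawetzFlux, timeWeight, radialWeight]
  ring

theorem morawetzDensity_sub_morawetzFlux_cone_le {C δ : ℝ} (hr : 1 ≤ r) (hC : 0 ≤ C)
    (hδ : 1 / r ^ 2 ≤ δ) (hδr : r * δ ≤ 1) (hl : |outgoing U r r| ≤ C * δ)
    (hb : √r * |U r r| ≤ 1 / 2) :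
    morawetzDensity U r r - morawetzFlux U r r ≤ (9 / 2 * C ^ 2 + 2 * C + 1) * δ := by
  have hr₀ : 0 ≤ r := by linarith
  have hτ : properTime r r ^ 2 = 2 * r + 1 := by rw [sq_properTime hr₀ le_rfl]; ring
  have hτ₁ : 1 ≤ properTime r r := by simpa using sub_le_properTime hr₀ le_rfl
  have hτr := properTime_le hr₀ le_rfl
  rw [morawetzDensity_sub_morawetzFlux_cone, coneFlux_identity (by positivity) (Real.sq_sqrt hr₀)]
  refine coneFlux_le hr ?_ ?_ ?_ (by linarith) hC hδ hδr hl ?_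
  · nlinarith
  · nlinarith
  · nlinarith
  · rwa [abs_mul, abs_of_nonneg (Real.sqrt_nonneg r)]

theorem integral_morawetz_cone_le (hU : IsRadialSolution U) {ε C : ℝ} (hε : 0 < ε) (hε' : ε ≤ 1)
    (hC : 0 ≤ C) (hR : 1 ≤ R) (hRS : R ≤ S)
    (hl : ∀ r, R ≤ r → |outgoing U r r| ≤ C * r ^ (-1 - ε))
    (hb : ∀ r, R ≤ r → √r * |U r r| ≤ 1 / 2) :
    ∫ s in R..S, (morawetzDensity U s s - morawetzFlux U s s) ≤
      (9 / 2 * C ^ 2 + 2 * C + 1) / ε := by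
  set K := 9 / 2 * C ^ 2 + 2 * C + 1
  have hcont : Continuous fun s => morawetzDensity U s s - morawetzFlux U s s :=
    (hU.continuous_morawetzDensity.comp (continuous_id.prodMk continuous_id)).sub
      (hU.continuous_morawetzFlux.comp (continuous_id.prodMk continuous_id))
  have hpos : ∀ r ∈ Icc R S, 0 < r := fun r hr => by linarith [hr.1]
  have hpoint : ∀ r ∈ Icc R S, morawetzDensity U r r - morawetzFlux U r r ≤ K * r ^ (-1 - ε) := by
    intro r hr
    have hr₁ : 1 ≤ r := hR.trans hr.1
    refine morawetzDensity_sub_morawetzFlux_cone_le hr₁ hC ?_ ?_ (hl r hr.1) (hb r hr.1)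
    · rw [one_div, ← Real.rpow_natCast, ← Real.rpow_neg (hpos r hr).le]
      exact Real.rpow_le_rpow_of_exponent_le hr₁ (by push_cast; linarith)
    · rw [← Real.rpow_one_add' (hpos r hr).le (by linarith)]
      exact Real.rpow_le_one_of_one_le_of_nonpos hr₁ (by linarith)
  have hnotmem : (0 : ℝ) ∉ uIcc R S := by
    rw [uIcc_of_le hRS]
    exact fun h => (hpos 0 h).false
  calc ∫ s in R..S, (morawetzDensity U s s - morawetzFlux U s s)
      ≤ ∫ s in R..S, K * s ^ (-1 - ε) := intervalIntegral.integral_mono_on hRS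
        (hcont.intervalIntegrable _ _)
        ((intervalIntegral.intervalIntegrable_rpow (Or.inr hnotmem)).const_mul K) hpoint
    _ = K / ε * (R ^ (-ε) - S ^ (-ε)) := by
        rw [intervalIntegral.integral_const_mul, integral_rpow (Or.inr ⟨by linarith, hnotmem⟩),
          show -1 - ε + 1 = -ε by ring]
        field_simp
        ring
    _ ≤ K / ε * 1 := by
        have h1 : R ^ (-ε) ≤ 1 := Real.rpow_le_one_of_one_le_of_nonpos hR (by linarith)
        have h2 : 0 ≤ S ^ (-ε) := Real.rpow_nonneg (by linarith) _
        gcongr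
        linarith
    _ = K / ε := mul_one _

theorem morawetzDensity_le {A : ℝ} (hr : 0 ≤ r) (hrR : r ≤ R) (hu : |U R r| ≤ A)
    (ha : |∂ₜ U R r| ≤ A) (hb : |∂ᵣ U R r| ≤ A) :
    morawetzDensity U R r ≤ R * (2 * (R + 1) * (A ^ 2 + A ^ 6 / 6) + A ^ 2) +
      R * (2 * (R + 1)) * A ^ 2 := by
  have hR : 0 ≤ R := hr.trans hrR
  have hy := (timeWeight_pos hr hrR).le
  have hyR : timeWeight R r ≤ 2 * (R + 1) := by
    rw [timeWeight]; linarith [properTime_pos hr hrR]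
  have hZ : radialWeight R r ≤ R * (2 * (R + 1)) :=
    (radialWeight_le hr hrR).trans (by gcongr)
  have ha2 : ∂ₜ U R r ^ 2 ≤ A ^ 2 := sq_le_sq' (abs_le.1 ha).1 (abs_le.1 ha).2
  have hb2 : ∂ᵣ U R r ^ 2 ≤ A ^ 2 := sq_le_sq' (abs_le.1 hb).1 (abs_le.1 hb).2
  have hu6 : U R r ^ 6 ≤ A ^ 6 := by
    rw [← Even.pow_abs (by decide : Even 6)]
    gcongr
  have : 0 ≤ U R r ^ 6 := by positivity
  have henergy : timeWeight R r * ((∂ₜ U R r ^ 2 + ∂ᵣ U R r ^ 2) / 2 + U R r ^ 6 / 6) ≤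
      2 * (R + 1) * (A ^ 2 + A ^ 6 / 6) := by
    gcongr
    linarith
  have hZab : radialWeight R r * (∂ₜ U R r * ∂ᵣ U R r) ≤ R * (2 * (R + 1)) * A ^ 2 :=
    (mul_le_mul_of_nonneg_left (mul_le_sq_of_abs_le ha hb) (radialWeight_nonneg hr hrR)).trans
      (by gcongr)
  exact add_le_add ((mul_le_mul_of_nonneg_left
    (add_le_add henergy (mul_le_sq_of_abs_le hu ha)) hr).trans (by gcongr)) hZab

theorem integral_cone_le (hU : IsRadialSolution U) {ε A C : ℝ} (hε : 0 < ε) (hε' : ε ≤ 1)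
    (hC : 0 ≤ C) (hR : 1 ≤ R) (hRS : R ≤ S)
    (hl : ∀ r, R ≤ r → |outgoing U r r| ≤ C * r ^ (-1 - ε))
    (hb : ∀ r, R ≤ r → √r * |U r r| ≤ 1 / 2)
    (hu : ∀ r, 0 ≤ r → |U R r| ≤ A) (hut : ∀ r, 0 ≤ r → |∂ₜ U R r| ≤ A)
    (hur : ∀ r, 0 ≤ r → |∂ᵣ U R r| ≤ A) :
    ∫ s in R..S, ∫ r in (0)..s, r * U s r ^ 6 / 3 ≤
      (9 / 2 * C ^ 2 + 2 * C + 1) / ε + 1 / 8 +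
        R * (R * (2 * (R + 1) * (A ^ 2 + A ^ 6 / 6) + A ^ 2) + R * (2 * (R + 1)) * A ^ 2) := by
  have hR₀ : 0 < R := by linarith
  have hbottom : ∫ r in (0)..R, morawetzDensity U R r ≤ ∫ _ in (0)..R,
      (R * (2 * (R + 1) * (A ^ 2 + A ^ 6 / 6) + A ^ 2) + R * (2 * (R + 1)) * A ^ 2) :=
    intervalIntegral.integral_mono_on hR₀.le
      ((hU.continuous_morawetzDensity.uncurry_left R).intervalIntegrable _ _)
      intervalIntegrable_const
      fun r hr => morawetzDensity_le hr.1 hr.2 (hu r hr.1) (hut r hr.1) (hur r hr.1)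
  rw [intervalIntegral.integral_const, sub_zero, smul_eq_mul] at hbottom
  have hboundary := hU.integral_cone_le_boundary hR₀ hRS
  have htop := hU.neg_one_div_eight_le_integral_morawetzDensity (hR₀.trans_le hRS) (hb S hRS)
  have hcone := hU.integral_morawetz_cone_le hε hε' hC hR hRS hl hb
  linarith

end IsRadialSolution

/-! ### The space-time norm of radial solutions -/

theorem setLIntegral_Ioi_le_of_forall_intervalIntegral_le {F : ℝ → ℝ} {a K : ℝ}
    (hF : Continuous F) (hF₀ : ∀ t, a < t → 0 ≤ F t) (hK : ∀ T, a ≤ T → ∫ t in a..T, F t ≤ K) :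
    ∫⁻ t in Ioi a, ENNReal.ofReal (F t) ≤ ENNReal.ofReal K := by
  have hcover : AECover (volume.restrict (Ioi a)) Filter.atTop (fun T : ℝ => Iic T) :=
    aecover_Iic Filter.tendsto_id
  refine le_of_tendsto
    (hcover.lintegral_tendsto_of_countably_generated hF.measurable.ennreal_ofReal.aemeasurable) ?_
  filter_upwards [Filter.eventually_ge_atTop a] with T hT
  rw [Measure.restrict_restrict measurableSet_Iic, inter_comm, Ioi_inter_Iic,
    ← ofReal_integral_eq_lintegral_ofReal hF.integrableOn_Ioc
      (ae_restrict_of_forall_mem measurableSet_Ioc fun t ht => hF₀ t ht.1),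
    ← intervalIntegral.integral_of_le hT]
  exact ENNReal.ofReal_le_ofReal (hK T hT)

theorem setLIntegral_Ioi_add_rpow_le {a c κ : ℝ} (hκ : 0 < κ) (hac : 1 ≤ a + c) :
    ∫⁻ x in Ioi a, ENNReal.ofReal ((x + c) ^ (-1 - κ)) ≤ ENNReal.ofReal (1 / κ) := by
  have hshift := (measurePreserving_add_right volume c).setLIntegral_comp_preimage_emb
    (measurableEmbedding_addRight c) (fun y => ENNReal.ofReal (y ^ (-1 - κ))) (Ioi (a + c))
  rw [preimage_add_const_Ioi, add_sub_cancel_right] at hshift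
  rw [hshift, ← ofReal_integral_eq_lintegral_ofReal
      (integrableOn_Ioi_rpow_of_lt (by linarith) (by linarith))
      (ae_restrict_of_forall_mem measurableSet_Ioi fun y hy =>
        Real.rpow_nonneg (by linarith [mem_Ioi.1 hy]) _),
    integral_Ioi_rpow_of_lt (by linarith) (by linarith)]
  refine ENNReal.ofReal_le_ofReal ?_
  rw [show -1 - κ + 1 = -κ by ring, neg_div_neg_eq]
  gcongr
  exact Real.rpow_le_one_of_one_le_of_nonpos hac (by linarith)

theorem lintegral_eq_lintegral_Ioi_add_comp_neg (f : ℝ → ENNReal) :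
    ∫⁻ t, f t = (∫⁻ t in Ioi (0 : ℝ), f t) + ∫⁻ t in Ioi (0 : ℝ), f (-t) := by
  have hneg : ∫⁻ t in Ioi (0 : ℝ), f (-t) = ∫⁻ t in Iio (0 : ℝ), f t := by
    simpa using (Measure.measurePreserving_neg (volume : Measure ℝ)).setLIntegral_comp_preimage_emb
      (MeasurableEquiv.neg ℝ).measurableEmbedding f (Iio 0)
  rw [hneg, setLIntegral_congr Iio_ae_eq_Iic, ← compl_Ioi,
    lintegral_add_compl f measurableSet_Ioi]

theorem lintegral_fun_norm {E : Type*} [NormedAddCommGroup E] [NormedSpace ℝ E]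
    [FiniteDimensional ℝ E] [Nontrivial E] [MeasurableSpace E] [BorelSpace E] (μ : Measure E)
    [μ.IsAddHaarMeasure] {f : ℝ → ENNReal} (hf : Measurable f) :
    ∫⁻ x, f ‖x‖ ∂μ = μ.toSphere univ *
      ∫⁻ r in Ioi (0 : ℝ), ENNReal.ofReal (r ^ (Module.finrank ℝ E - 1)) * f r := by
  have hpolar := μ.measurePreserving_homeomorphUnitSphereProd.lintegral_comp_emb
    (Homeomorph.measurableEmbedding _) (fun z => f z.2)
  simp only [homeomorphUnitSphereProd_apply_snd_coe] at hpolar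
  have hpunctured : ∫⁻ x, f ‖x‖ ∂μ = ∫⁻ x : ({0}ᶜ : Set E), f ‖(x : E)‖ ∂μ.comap Subtype.val := by
    rw [lintegral_subtype_comap (measurableSet_singleton 0).compl (fun x => f ‖x‖),
      restrict_compl_singleton]
  rw [hpunctured, hpolar, lintegral_prod _ (by fun_prop)]
  simp only [lintegral_const]
  rw [mul_comm, Measure.volumeIoiPow,
    lintegral_withDensity_eq_lintegral_mul _ (by fun_prop) (by fun_prop),
    ← lintegral_subtype_comap measurableSet_Ioi
      (fun r => ENNReal.ofReal (r ^ (Module.finrank ℝ E - 1)) * f r)]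
  rfl

theorem mul_pow_six_le_of_exterior {B ε t r u : ℝ} (hε : 0 < ε) (hε' : ε ≤ 1 / 3)
    (ht : 0 ≤ t) (hr : t + 1 ≤ r) (h : √r * |u| ≤ B * (r - t) ^ (-ε)) :
    r * u ^ 6 ≤ B ^ 6 * (t + 1) ^ (-1 - 3 * ε) * (r - t) ^ (-1 - 3 * ε) := by
  have hr₀ : 0 < r := by linarith
  have hrt : 0 < r - t := by linarith
  have hsqrt : √r ^ 6 = r ^ 3 := by
    rw [show 6 = 2 * 3 from rfl, pow_mul, Real.sq_sqrt hr₀.le]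
  have hinv : r ^ (-2 : ℝ) ≤ (t + 1) ^ (-1 - 3 * ε) * (r - t) ^ (-1 + 3 * ε) :=
    calc r ^ (-2 : ℝ) = r ^ (-1 - 3 * ε) * r ^ (-1 + 3 * ε) := by
          rw [← Real.rpow_add hr₀]; ring_nf
      _ ≤ (t + 1) ^ (-1 - 3 * ε) * (r - t) ^ (-1 + 3 * ε) :=
          mul_le_mul (Real.rpow_le_rpow_of_nonpos (by linarith) hr (by linarith))
            (Real.rpow_le_rpow_of_nonpos hrt (by linarith) (by linarith))
            (by positivity) (by positivity)
  calc r * u ^ 6 = (√r * |u|) ^ 6 * r ^ (-2 : ℝ) := by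
        rw [mul_pow, hsqrt, Even.pow_abs (by decide), Real.rpow_neg hr₀.le, Real.rpow_ofNat]
        field_simp
    _ ≤ (B * (r - t) ^ (-ε)) ^ 6 * ((t + 1) ^ (-1 - 3 * ε) * (r - t) ^ (-1 + 3 * ε)) := by
        gcongr
    _ = B ^ 6 * (t + 1) ^ (-1 - 3 * ε) * (((r - t) ^ (-ε)) ^ 6 * (r - t) ^ (-1 + 3 * ε)) := by
        ring
    _ = B ^ 6 * (t + 1) ^ (-1 - 3 * ε) * (r - t) ^ (-1 - 3 * ε) := by
        rw [← Real.rpow_mul_natCast hrt.le, ← Real.rpow_add hrt]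
        push_cast
        ring_nf

theorem lintegral_exterior_le {U : ℝ → ℝ → ℝ} {B ε R : ℝ} (hε : 0 < ε) (hε' : ε ≤ 1 / 3)
    (hR : 1 ≤ R) (hU : ∀ t r, 0 ≤ t → t + R ≤ r → √r * |U t r| ≤ B * (r - t) ^ (-ε)) :
    ∫⁻ t in Ioi (0 : ℝ), ∫⁻ r in Ioi (t + R), ENNReal.ofReal (r * U t r ^ 6) ≤
      ENNReal.ofReal (B ^ 6 / (3 * ε) ^ 2) := by
  have hslice : ∀ t ∈ Ioi (0 : ℝ), ∫⁻ r in Ioi (t + R), ENNReal.ofReal (r * U t r ^ 6) ≤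
      ENNReal.ofReal (B ^ 6 / (3 * ε)) * ENNReal.ofReal ((t + 1) ^ (-1 - 3 * ε)) := by
    intro t ht
    have ht₀ : 0 ≤ t := (mem_Ioi.1 ht).le
    calc ∫⁻ r in Ioi (t + R), ENNReal.ofReal (r * U t r ^ 6)
        ≤ ∫⁻ r in Ioi (t + R), ENNReal.ofReal (B ^ 6 * (t + 1) ^ (-1 - 3 * ε)) *
            ENNReal.ofReal ((r + -t) ^ (-1 - 3 * ε)) := by
          refine setLIntegral_mono' measurableSet_Ioi fun r hr => ?_
          have hr' : t + R ≤ r := (mem_Ioi.1 hr).le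
          rw [← ENNReal.ofReal_mul (by positivity), ← sub_eq_add_neg]
          exact ENNReal.ofReal_le_ofReal
            (mul_pow_six_le_of_exterior hε hε' ht₀ (by linarith) (hU t r ht₀ hr'))
      _ = ENNReal.ofReal (B ^ 6 * (t + 1) ^ (-1 - 3 * ε)) *
            ∫⁻ r in Ioi (t + R), ENNReal.ofReal ((r + -t) ^ (-1 - 3 * ε)) :=
          lintegral_const_mul' _ _ ENNReal.ofReal_ne_top
      _ ≤ ENNReal.ofReal (B ^ 6 * (t + 1) ^ (-1 - 3 * ε)) * ENNReal.ofReal (1 / (3 * ε)) := by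
          gcongr
          exact setLIntegral_Ioi_add_rpow_le (by positivity) (by linarith)
      _ = ENNReal.ofReal (B ^ 6 / (3 * ε)) * ENNReal.ofReal ((t + 1) ^ (-1 - 3 * ε)) := by
          rw [← ENNReal.ofReal_mul (by positivity), ← ENNReal.ofReal_mul (by positivity)]
          ring_nf
  calc ∫⁻ t in Ioi (0 : ℝ), ∫⁻ r in Ioi (t + R), ENNReal.ofReal (r * U t r ^ 6)
      ≤ ∫⁻ t in Ioi (0 : ℝ),
          ENNReal.ofReal (B ^ 6 / (3 * ε)) * ENNReal.ofReal ((t + 1) ^ (-1 - 3 * ε)) :=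
        setLIntegral_mono' measurableSet_Ioi hslice
    _ = ENNReal.ofReal (B ^ 6 / (3 * ε)) *
          ∫⁻ t in Ioi (0 : ℝ), ENNReal.ofReal ((t + 1) ^ (-1 - 3 * ε)) :=
        lintegral_const_mul' _ _ ENNReal.ofReal_ne_top
    _ ≤ ENNReal.ofReal (B ^ 6 / (3 * ε)) * ENNReal.ofReal (1 / (3 * ε)) := by
        gcongr
        exact setLIntegral_Ioi_add_rpow_le (by positivity) (by norm_num)
    _ = ENNReal.ofReal (B ^ 6 / (3 * ε) ^ 2) := by
        rw [← ENNReal.ofReal_mul (by positivity)]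
        congr 1
        field_simp

theorem lintegral_interior_le {U : ℝ → ℝ → ℝ} {R K : ℝ} (hU : Continuous U.uncurry) (hR : 0 ≤ R)
    (hK : ∀ T, 0 ≤ T → ∫ t in (0)..T, ∫ r in (0)..(t + R), r * U t r ^ 6 ≤ K) :
    ∫⁻ t in Ioi (0 : ℝ), ∫⁻ r in Ioc 0 (t + R), ENNReal.ofReal (r * U t r ^ 6) ≤
      ENNReal.ofReal K := by
  have hcont : Continuous (fun z : ℝ × ℝ => z.2 * U z.1 z.2 ^ 6) := continuous_snd.mul (hU.pow 6)
  have hnonneg : ∀ t r : ℝ, 0 ≤ r → 0 ≤ r * U t r ^ 6 := fun t r hr => by positivity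
  have hslice : ∀ t ∈ Ioi (0 : ℝ), ∫⁻ r in Ioc 0 (t + R), ENNReal.ofReal (r * U t r ^ 6) =
      ENNReal.ofReal (∫ r in (0)..(t + R), r * U t r ^ 6) := by
    intro t ht
    rw [intervalIntegral.integral_of_le (by linarith [mem_Ioi.1 ht]),
      ofReal_integral_eq_lintegral_ofReal
        (by exact (hcont.comp (Continuous.prodMk_right t)).integrableOn_Ioc)
        (ae_restrict_of_forall_mem measurableSet_Ioc fun r hr => hnonneg t r hr.1.le)]
  rw [setLIntegral_congr_fun measurableSet_Ioi hslice]
  refine setLIntegral_Ioi_le_of_forall_intervalIntegral_le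
    (intervalIntegral.continuous_parametric_intervalIntegral_of_continuous hcont (by fun_prop))
    (fun t ht => ?_) hK
  exact intervalIntegral.integral_nonneg (by linarith) fun r hr => hnonneg t r hr.1

theorem lintegral_le_interior_add_exterior {U : ℝ → ℝ → ℝ} {R : ℝ} (hU : Continuous U.uncurry)
    (hR : 0 ≤ R) :
    ∫⁻ t in Ioi (0 : ℝ), ∫⁻ r in Ioi (0 : ℝ), ENNReal.ofReal (r * U t r ^ 6) ≤
      (∫⁻ t in Ioi (0 : ℝ), ∫⁻ r in Ioc 0 (t + R), ENNReal.ofReal (r * U t r ^ 6)) +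
        ∫⁻ t in Ioi (0 : ℝ), ∫⁻ r in Ioi (t + R), ENNReal.ofReal (r * U t r ^ 6) := by
  have hcont : Continuous (fun z : ℝ × ℝ => ENNReal.ofReal (z.2 * U z.1 z.2 ^ 6)) :=
    ENNReal.continuous_ofReal.comp (continuous_snd.mul (hU.pow 6))
  have hmeas : Measurable fun t : ℝ =>
      ∫⁻ r in Ioi (t + R), ENNReal.ofReal (r * U t r ^ 6) := by
    have hset : MeasurableSet {z : ℝ × ℝ | z.1 + R < z.2} :=
      measurableSet_lt (by fun_prop) (by fun_prop)
    convert! (hcont.measurable.indicator hset).lintegral_prod_right' (ν := volume) using 2 with t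
    rw [← lintegral_indicator measurableSet_Ioi]
    rfl
  rw [← lintegral_add_right _ hmeas]
  refine setLIntegral_mono' measurableSet_Ioi fun t ht => ?_
  rw [← Ioc_union_Ioi_eq_Ioi (by linarith [mem_Ioi.1 ht] : 0 ≤ t + R)]
  exact lintegral_union_le _ _ _

theorem timeDeriv_comp_sub_const (U : ℝ → ℝ → ℝ) (a : ℝ) :
    ∂ₜ (fun s r => U (s - a) r) = fun s r => ∂ₜ U (s - a) r := by
  ext s r
  exact deriv_comp_sub_const (f := fun s => U s r) ..

theorem outgoing_comp_sub_const (U : ℝ → ℝ → ℝ) (a s r : ℝ) :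
    outgoing (fun s r => U (s - a) r) s r = outgoing U (s - a) r := by
  simp only [outgoing, timeDeriv_comp_sub_const]
  rfl

/-- The bound which the Morawetz-type estimate gives for the space-time integral of `r * U ^ 6`
over the interior region `r ≤ t + R`. The three summands come from the lateral, top and bottom
boundaries of the truncated cone. -/
noncomputable def interiorBound (ε A R : ℝ) : ℝ :=
  3 * ((9 / 2 * (47 / 2 * A) ^ 2 + 2 * (47 / 2 * A) + 1) / ε + 1 / 8 +
      R * (R * (2 * (R + 1) * (A ^ 2 + A ^ 6 / 6) + A ^ 2) + R * (2 * (R + 1)) * A ^ 2))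

namespace IsRadialSolution

variable {U : ℝ → ℝ → ℝ} {ε A R : ℝ}

theorem comp_sub_const (hU : IsRadialSolution U) (a : ℝ) :
    IsRadialSolution (fun s r => U (s - a) r) where
  contDiff := hU.contDiff.comp ((contDiff_fst.sub contDiff_const).prodMk contDiff_snd)
  equation s r hr := by
    rw [timeDeriv_comp_sub_const, timeDeriv_comp_sub_const]
    exact hU.equation (s - a) r hr

theorem integral_interior_le (hU : IsRadialSolution U) (hdata : HasDecayingData ε A U)
    (hε : 0 < ε) (hε' : ε ≤ 1 / 16) (hA : 0 < A) (hR : 1 ≤ R)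
    (hRsmall : (A + 47 / 4 * A / ε) * R ^ (-ε) < 1 / 2) {T : ℝ} (hT : 0 ≤ T) :
    ∫ t in (0)..T, ∫ r in (0)..(t + R), r * U t r ^ 6 ≤ interiorBound ε A R := by
  have hR₀ : 0 < R := by linarith
  have hdecay : ∀ {B r κ : ℝ}, κ ≤ 0 → 0 ≤ r → B ≤ A * (1 + r) ^ κ → B ≤ A := fun hκ hr hB =>
    hB.trans (mul_le_of_le_one_right hA.le
      (Real.rpow_le_one_of_one_le_of_nonpos (by linarith) hκ))
  have hcone := (hU.comp_sub_const R).integral_cone_le (S := T + R) (C := 47 / 2 * A) hε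
    (by linarith) (by positivity) hR (by linarith) (fun r hr => ?_) (fun r hr => ?_)
    (A := A) (fun r hr => ?_) (fun r hr => ?_) (fun r hr => ?_)
  · have hshift := intervalIntegral.integral_comp_add_right (a := 0) (b := T)
      (fun s => ∫ r in (0)..s, r * U (s - R) r ^ 6 / 3) R
    rw [zero_add] at hshift
    rw [← hshift] at hcone
    simp only [add_sub_cancel_right, intervalIntegral.integral_div] at hcone
    rw [interiorBound]
    linarith
  · rw [outgoing_comp_sub_const]
    refine (hU.abs_outgoing_le_of_exterior hdata hε hε' hA hR₀ hRsmall (by linarith)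
      (by linarith)).trans ?_
    have : (r + (r - R)) ^ (-1 - ε) ≤ r ^ (-1 - ε) :=
      Real.rpow_le_rpow_of_nonpos (by linarith) (by linarith) (by linarith)
    gcongr
  · exact (hU.bootstrapBound hdata hε hε' hA hR₀ hRsmall (by linarith) (by linarith)).1.le
  · simpa using hdecay (by linarith) hr (hdata.abs_le r hr)
  · simpa [timeDeriv_comp_sub_const] using hdecay (by linarith) hr (hdata.abs_timeDeriv_le r hr)
  · simpa [radialDeriv] using hdecay (by linarith) hr (hdata.abs_radialDeriv_le r hr)

theorem exists_lintegral_le (hε : 0 < ε) (hA : 0 < A) :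
    ∃ C : ℝ, 0 < C ∧ ∀ U, IsRadialSolution U → HasDecayingData ε A U →
      ∫⁻ t in Ioi (0 : ℝ), ∫⁻ r in Ioi (0 : ℝ), ENNReal.ofReal (r * U t r ^ 6) ≤
        ENNReal.ofReal C := by
  obtain ⟨δ, hδ, hδ', hδε⟩ : ∃ δ, 0 < δ ∧ δ ≤ 1 / 16 ∧ δ ≤ ε :=
    ⟨min ε (1 / 16), by positivity, min_le_right _ _, min_le_left _ _⟩
  obtain ⟨R, hRsmall, hR⟩ : ∃ R, (A + 47 / 4 * A / δ) * R ^ (-δ) < 1 / 2 ∧ 1 ≤ R := by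
    have hlim := (tendsto_rpow_neg_atTop hδ).const_mul (A + 47 / 4 * A / δ)
    rw [mul_zero] at hlim
    exact ((hlim.eventually_lt_const one_half_pos).and (Filter.eventually_ge_atTop 1)).exists
  have hR₀ : 0 < R := by linarith
  have hinterior : 0 < interiorBound δ A R := by unfold interiorBound; positivity
  refine ⟨interiorBound δ A R + (A + 47 / 4 * A / δ) ^ 6 / (3 * δ) ^ 2, by positivity,
    fun U hU hdata => ?_⟩
  have hdata' := hdata.mono hA.le hδε
  have hcont := hU.contDiff.continuous
  rw [ENNReal.ofReal_add hinterior.le (by positivity)]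
  refine (lintegral_le_interior_add_exterior hcont hR₀.le).trans (add_le_add ?_ ?_)
  · exact lintegral_interior_le hcont hR₀.le fun T hT =>
      hU.integral_interior_le hdata' hδ hδ' hA hR hRsmall hT
  · exact lintegral_exterior_le hδ (by linarith) hR fun t r ht hr =>
      hU.sqrt_mul_abs_le_of_exterior hdata' hδ hδ' hA hR₀ hRsmall ht hr

end IsRadialSolution

/-! ### Finite speed of propagation -/

/-- The partial derivative of `f` in the `i`-th coordinate. -/
noncomputable def coordDeriv {m : ℕ} (i : Fin m) (f : (Fin m → ℝ) → ℝ) (p : Fin m → ℝ) : ℝ :=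
  fderiv ℝ f p (Pi.single i 1)

section coordDeriv

variable {m : ℕ} {f g : (Fin m → ℝ) → ℝ} {p : Fin m → ℝ}

theorem contDiff_coordDeriv {k : ℕ} (hf : ContDiff ℝ (k + 1) f) (i : Fin m) :
    ContDiff ℝ k (coordDeriv i f) :=
  (hf.fderiv_right (by norm_num)).clm_apply contDiff_const

theorem coordDeriv_fun_mul (hf : DifferentiableAt ℝ f p) (hg : DifferentiableAt ℝ g p)
    (i : Fin m) :
    coordDeriv i (fun q => f q * g q) p = f p * coordDeriv i g p + coordDeriv i f p * g p := by
  simp only [coordDeriv, fderiv_fun_mul hf hg, add_apply, smul_apply, smul_eq_mul]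
  ring

theorem coordDeriv_fun_neg (i : Fin m) :
    coordDeriv i (fun q => -f q) p = -coordDeriv i f p := by
  simp [coordDeriv, fderiv_fun_neg]

theorem coordDeriv_coordDeriv (hf : ContDiff ℝ 2 f) (i j : Fin m) (p : Fin m → ℝ) :
    coordDeriv i (coordDeriv j f) p =
      fderiv ℝ (fderiv ℝ f) p (Pi.single i 1) (Pi.single j 1) :=
  fderiv_fderiv_apply_const hf _ _ _

theorem coordDeriv_comm (hf : ContDiff ℝ 2 f) (i j : Fin m) :
    coordDeriv i (coordDeriv j f) = coordDeriv j (coordDeriv i f) := by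
  ext p
  rw [coordDeriv_coordDeriv hf, coordDeriv_coordDeriv hf,
    hf.contDiffAt.isSymmSndFDerivAt (by simp)]

end coordDeriv

section FiniteSpeed

variable {n : ℕ}

/-- The wave operator `∂₀² - ∑ ∂ᵢ₊₁²`; the coordinate `0` is time. -/
noncomputable def waveOperator (D : (Fin (n + 1) → ℝ) → ℝ) (p : Fin (n + 1) → ℝ) : ℝ :=
  coordDeriv 0 (coordDeriv 0 D) p - ∑ i : Fin n, coordDeriv i.succ (coordDeriv i.succ D) p

/-- The energy density of the Klein–Gordon equation: the mass term controls `D` itself. -/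
noncomputable def energyDensity (D : (Fin (n + 1) → ℝ) → ℝ) (p : Fin (n + 1) → ℝ) : ℝ :=
  (∑ i, coordDeriv i D p ^ 2 + D p ^ 2) / 2

/-- The space-time energy current of `D`, multiplied by a weight `φ`. -/
noncomputable def energyCurrent (φ D : (Fin (n + 1) → ℝ) → ℝ) :
    Fin (n + 1) → (Fin (n + 1) → ℝ) → ℝ :=
  Fin.cons (fun p => φ p * energyDensity D p)
    fun i p => φ p * -(coordDeriv 0 D p * coordDeriv i.succ D p)

/-- A smooth weight supported in the backward cone-like region `2 b p₀ + ∑ pᵢ₊₁² ≤ b²`, decaying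
exponentially in time. Where the spatial coordinates have norm at most `b`, the level sets of
`b² - 2 b p₀ - ∑ pᵢ₊₁²` are spacelike. -/
noncomputable def causalWeight (l b : ℝ) (p : Fin (n + 1) → ℝ) : ℝ :=
  Real.exp (-l * p 0) * expNegInvGlue (b ^ 2 - 2 * b * p 0 - ∑ i : Fin n, p i.succ ^ 2)

/-- The derivative of `causalWeight` at fixed time with respect to the value of its level function
`b² - 2 b p₀ - ∑ pᵢ₊₁²`. -/
noncomputable def causalWeightSlope (l b : ℝ) (p : Fin (n + 1) → ℝ) : ℝ :=
  Real.exp (-l * p 0) * deriv expNegInvGlue (b ^ 2 - 2 * b * p 0 - ∑ i : Fin n, p i.succ ^ 2)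

theorem contDiff_causalWeight (l b : ℝ) :
    ContDiff ℝ 1 (causalWeight l b : (Fin (n + 1) → ℝ) → ℝ) := by
  unfold causalWeight
  have := expNegInvGlue.contDiff (n := 1)
  fun_prop

theorem deriv_expNegInvGlue_nonneg (s : ℝ) : 0 ≤ deriv expNegInvGlue s :=
  expNegInvGlue.monotone.deriv_nonneg

theorem deriv_expNegInvGlue_of_nonpos {s : ℝ} (hs : s ≤ 0) : deriv expNegInvGlue s = 0 := by
  refine IsLocalMin.deriv_eq_zero (Filter.Eventually.of_forall fun y => ?_)
  rw [expNegInvGlue.zero_of_nonpos hs]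
  exact expNegInvGlue.nonneg y

theorem coordDeriv_causalWeight (l b : ℝ) (p : Fin (n + 1) → ℝ) :
    coordDeriv 0 (causalWeight l b) p =
        -l * causalWeight l b p - 2 * b * causalWeightSlope l b p ∧
      ∀ i : Fin n, coordDeriv i.succ (causalWeight l b) p =
        -(2 * p i.succ * causalWeightSlope l b p) := by
  have happly : ∀ j, HasFDerivAt (fun q : Fin (n + 1) → ℝ => q j) _ p :=
    fun j => hasFDerivAt_apply (𝕜 := ℝ) j p
  have hη := (expNegInvGlue.contDiff (n := 1)).differentiable (by norm_num)
    (b ^ 2 - 2 * b * p 0 - ∑ i : Fin n, p i.succ ^ 2) |>.hasDerivAt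
  have hlevel := (((happly 0).const_mul (2 * b)).const_sub (b ^ 2)).fun_sub
    (HasFDerivAt.fun_sum (u := Finset.univ) fun (i : Fin n) _ => (happly i.succ).pow 2)
  have hcomp := hη.comp_hasFDerivAt p hlevel
  have hφ : HasFDerivAt (causalWeight l b) _ p := ((happly 0).const_mul (-l)).exp.fun_mul hcomp
  constructor
  · simp [coordDeriv, hφ.fderiv, causalWeight, causalWeightSlope]
    ring
  · intro i
    simp [coordDeriv, hφ.fderiv, causalWeightSlope, Pi.single_apply]
    ring

theorem energy_inequality {h l b v g₀ d q : ℝ} {g y : Fin n → ℝ} (hl : 0 ≤ l) (hv : 0 ≤ v)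
    (hh : 0 ≤ h) (hb : 0 ≤ b) (hy : h = 0 ∨ ∑ i, y i ^ 2 ≤ b ^ 2) (hq : |q| ≤ (l - 1) * |d|) :
    (-l * v - 2 * b * h) * ((g₀ ^ 2 + ∑ i, g i ^ 2 + d ^ 2) / 2) +
      2 * h * (g₀ * ∑ i, y i * g i) + v * (g₀ * (q + d)) ≤ 0 := by
  have hgrad : 2 * h * (g₀ * ∑ i, y i * g i) ≤
      2 * b * h * ((g₀ ^ 2 + ∑ i, g i ^ 2 + d ^ 2) / 2) := by
    rcases hy with rfl | hy
    · simp
    have hcs : |∑ i, y i * g i| ≤ b * √(∑ i, g i ^ 2) := by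
      rw [← Real.sqrt_sq hb, ← Real.sqrt_mul (sq_nonneg b)]
      refine Real.abs_le_sqrt ((Finset.sum_mul_sq_le_sq_mul_sq _ _ _).trans ?_)
      gcongr
    have hprod : g₀ * ∑ i, y i * g i ≤ |g₀| * (b * √(∑ i, g i ^ 2)) := by
      refine (le_abs_self _).trans ?_
      rw [abs_mul]
      gcongr
    have hsq := Real.sq_sqrt (Finset.sum_nonneg fun i _ => sq_nonneg (g i) : 0 ≤ ∑ i, g i ^ 2)
    have hamgm : |g₀| * √(∑ i, g i ^ 2) ≤ (g₀ ^ 2 + ∑ i, g i ^ 2 + d ^ 2) / 2 := by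
      nlinarith [two_mul_le_add_sq (|g₀|) (√(∑ i, g i ^ 2)), sq_abs g₀, sq_nonneg d]
    calc 2 * h * (g₀ * ∑ i, y i * g i) ≤ 2 * h * (|g₀| * (b * √(∑ i, g i ^ 2))) := by gcongr
      _ = 2 * b * h * (|g₀| * √(∑ i, g i ^ 2)) := by ring
      _ ≤ 2 * b * h * ((g₀ ^ 2 + ∑ i, g i ^ 2 + d ^ 2) / 2) := by gcongr
  have hsource : g₀ * (q + d) ≤ l * ((g₀ ^ 2 + ∑ i, g i ^ 2 + d ^ 2) / 2) := by
    have hg : 0 ≤ ∑ i, g i ^ 2 := Finset.sum_nonneg fun i _ => sq_nonneg _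
    have hqd : |q + d| ≤ l * |d| := (abs_add_le q d).trans (by linarith)
    calc g₀ * (q + d) ≤ |g₀| * (l * |d|) := by
          refine (le_abs_self _).trans ?_
          rw [abs_mul]
          gcongr
      _ = l * (|g₀| * |d|) := by ring
      _ ≤ l * ((g₀ ^ 2 + ∑ i, g i ^ 2 + d ^ 2) / 2) := by
          gcongr
          nlinarith [two_mul_le_add_sq (|g₀|) (|d|), sq_abs g₀, sq_abs d]
  linarith [mul_le_mul_of_nonneg_left hsource hv]

theorem coordDeriv_energyDensity {D : (Fin (n + 1) → ℝ) → ℝ} (hD : ContDiff ℝ 2 D)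
    (p : Fin (n + 1) → ℝ) :
    coordDeriv 0 (energyDensity D) p =
      ∑ i, coordDeriv i D p * coordDeriv i (coordDeriv 0 D) p + D p * coordDeriv 0 D p := by
  have hdiff : ∀ i, HasFDerivAt (coordDeriv i D) (fderiv ℝ (coordDeriv i D) p) p := fun i =>
    ((contDiff_coordDeriv (k := 1) hD i).differentiable (by norm_num) p).hasFDerivAt
  have hD' : HasFDerivAt D (fderiv ℝ D p) p := (hD.differentiable (by norm_num) p).hasFDerivAt
  have henergy : HasFDerivAt (energyDensity D) _ p :=
    ((HasFDerivAt.fun_sum (u := Finset.univ) fun i _ => (hdiff i).pow 2).fun_add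
      (hD'.pow 2)).mul_const (2⁻¹ : ℝ)
  simp only [coordDeriv_comm hD _ 0]
  simp only [coordDeriv, henergy.fderiv, Nat.add_one_sub_one, pow_one, nsmul_eq_mul,
    Nat.cast_ofNat, smul_add, add_apply, smul_apply, sum_apply, smul_eq_mul, Finset.mul_sum]
  congr 1
  · exact Finset.sum_congr rfl fun i _ => by ring
  · ring

theorem contDiff_energyDensity {D : (Fin (n + 1) → ℝ) → ℝ} (hD : ContDiff ℝ 2 D) :
    ContDiff ℝ 1 (energyDensity D) := by
  have hcoord : ∀ i, ContDiff ℝ 1 (coordDeriv i D) := fun i => contDiff_coordDeriv hD i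
  have hD' : ContDiff ℝ 1 D := hD.of_le (by norm_num)
  unfold energyDensity
  fun_prop

theorem contDiff_energyCurrent {φ D : (Fin (n + 1) → ℝ) → ℝ} (hφ : ContDiff ℝ 1 φ)
    (hD : ContDiff ℝ 2 D) (i : Fin (n + 1)) : ContDiff ℝ 1 (energyCurrent φ D i) := by
  have hcoord : ∀ i, ContDiff ℝ 1 (coordDeriv i D) := fun i => contDiff_coordDeriv hD i
  cases i using Fin.cases with
  | zero => exact hφ.mul (contDiff_energyDensity hD)
  | succ i => exact hφ.mul ((hcoord 0).mul (hcoord i.succ)).neg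

theorem divergence_energyCurrent {φ D : (Fin (n + 1) → ℝ) → ℝ} (hφ : ContDiff ℝ 1 φ)
    (hD : ContDiff ℝ 2 D) (p : Fin (n + 1) → ℝ) :
    ∑ i, coordDeriv i (energyCurrent φ D i) p =
      coordDeriv 0 φ p * energyDensity D p -
        ∑ i : Fin n, coordDeriv i.succ φ p * (coordDeriv 0 D p * coordDeriv i.succ D p) +
        φ p * (coordDeriv 0 D p * (waveOperator D p + D p)) := by
  have hφ' := hφ.differentiable (by norm_num) p
  have hcoord : ∀ i, DifferentiableAt ℝ (coordDeriv i D) p := fun i =>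
    (contDiff_coordDeriv (k := 1) hD i).differentiable (by norm_num) p
  have htime := coordDeriv_fun_mul hφ'
    ((contDiff_energyDensity hD).differentiable (by norm_num) p) 0
  have hspace : ∀ i : Fin n, coordDeriv i.succ (energyCurrent φ D i.succ) p = _ := fun i =>
    coordDeriv_fun_mul hφ' ((hcoord 0).fun_mul (hcoord i.succ)).fun_neg i.succ
  rw [Fin.sum_univ_succ]
  change coordDeriv 0 (fun q => φ q * energyDensity D q) p + _ = _
  rw [htime, coordDeriv_energyDensity hD, Fin.sum_univ_succ, waveOperator]
  simp only [hspace, coordDeriv_fun_neg, coordDeriv_fun_mul (hcoord 0) (hcoord _), mul_add,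
    mul_sub, mul_neg, Finset.mul_sum, Finset.sum_add_distrib, Finset.sum_neg_distrib]
  have hcross : ∑ i : Fin n, φ p * (coordDeriv i.succ D p * coordDeriv i.succ (coordDeriv 0 D) p) =
      ∑ i : Fin n, φ p * (coordDeriv i.succ (coordDeriv 0 D) p * coordDeriv i.succ D p) := by
    simp only [mul_comm (coordDeriv _ D p)]
  linarith

theorem slice_eq_zero {f : (Fin (n + 1) → ℝ) → ℝ} {b s : ℝ} {x : Fin n → ℝ}
    (hf : ∀ p, 0 ≤ p 0 → (∃ i : Fin n, b ≤ |p i.succ|) → f p = 0) (hs : 0 ≤ s)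
    (hx : x ∉ Icc (fun _ => -b) fun _ => b) : f (Fin.cons s x) = 0 := by
  refine hf _ hs ?_
  by_contra! hsmall
  exact hx ⟨fun i => (abs_lt.1 (hsmall i)).1.le, fun i => (abs_lt.1 (hsmall i)).2.le⟩

theorem integral_divergence_slab {F : Fin (n + 1) → (Fin (n + 1) → ℝ) → ℝ} {T b : ℝ}
    (hF : ∀ i, ContDiff ℝ 1 (F i)) (hT : 0 ≤ T) (hb : 0 ≤ b)
    (hsupp : ∀ p, 0 ≤ p 0 → (∃ i : Fin n, b ≤ |p i.succ|) → ∀ i, F i p = 0) :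
    ∫ p in Icc (Fin.cons 0 fun _ => -b : Fin (n + 1) → ℝ) (Fin.cons T fun _ => b),
        ∑ i, coordDeriv i (F i) p =
      (∫ x : Fin n → ℝ, F 0 (Fin.cons T x)) - ∫ x : Fin n → ℝ, F 0 (Fin.cons 0 x) := by
  have hle : (Fin.cons 0 fun _ => -b : Fin (n + 1) → ℝ) ≤ Fin.cons T fun _ => b :=
    Fin.cons_le_cons.2 ⟨hT, fun _ => by linarith⟩
  have hdiv := integral_divergence_of_hasFDerivAt_off_countable' _ _ hle F
    (fun i p => fderiv ℝ (F i) p) ∅ countable_empty (fun i => (hF i).continuous.continuousOn)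
    (fun p _ i => ((hF i).differentiable (by norm_num) p).hasFDerivAt)
    ((continuous_finsetSum _ fun i _ => ((hF i).continuous_fderiv (by norm_num)).clm_apply
      continuous_const).continuousOn.integrableOn_compact isCompact_Icc)
  have hwhole : ∀ s, 0 ≤ s → ∫ x in Icc (fun _ => -b : Fin n → ℝ) (fun _ => b),
      F 0 (Fin.cons s x) = ∫ x : Fin n → ℝ, F 0 (Fin.cons s x) := fun s hs => by
    exact setIntegral_eq_integral_of_forall_compl_eq_zero fun x hx =>
      slice_eq_zero (fun p hp hlarge => hsupp p hp hlarge 0) hs hx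
  have hface : ∀ s c : ℝ, (Fin.cons s fun _ => c : Fin (n + 1) → ℝ) ∘ (0 : Fin (n + 1)).succAbove =
      fun _ => c := fun s c => by ext; simp
  simp only [coordDeriv]
  rw [hdiv, Fin.sum_univ_succ, Finset.sum_eq_zero, add_zero]
  · rw [← hwhole T hT, ← hwhole 0 le_rfl]
    simp only [Fin.insertNth_zero', Fin.cons_zero, hface]
  · intro i _
    have hlateral : ∀ s, |s| = b → ∫ x in Icc
        ((Fin.cons 0 fun _ => -b : Fin (n + 1) → ℝ) ∘ i.succ.succAbove)
        ((Fin.cons T fun _ => b : Fin (n + 1) → ℝ) ∘ i.succ.succAbove),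
        F i.succ (i.succ.insertNth s x) = 0 := by
      refine fun s hs => setIntegral_eq_zero_of_forall_eq_zero fun x hx => ?_
      obtain ⟨j, hj⟩ := Fin.exists_succAbove_eq (Fin.succ_ne_zero i).symm
      refine hsupp _ ?_ ⟨i, ?_⟩ _
      · have hxj := hx.1 j
        rw [Function.comp_apply, hj] at hxj
        rwa [← hj, Fin.insertNth_apply_succAbove]
      · rw [Fin.insertNth_apply_same, hs]
    rw [Fin.cons_succ, Fin.cons_succ, hlateral b (abs_of_nonneg hb),
      hlateral (-b) (by rw [abs_neg, abs_of_nonneg hb]), sub_zero]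

theorem causalWeight_eq_zero {l b : ℝ} (hb : 0 ≤ b) {p : Fin (n + 1) → ℝ} (hp : 0 ≤ p 0)
    (hlarge : ∃ i : Fin n, b ≤ |p i.succ|) : causalWeight l b p = 0 := by
  obtain ⟨i, hi⟩ := hlarge
  have hcoord : b ^ 2 ≤ p i.succ ^ 2 := sq_le_sq.2 (by rwa [abs_of_nonneg hb])
  have hsum : p i.succ ^ 2 ≤ ∑ j : Fin n, p j.succ ^ 2 :=
    Finset.single_le_sum (f := fun j : Fin n => p j.succ ^ 2) (fun j _ => sq_nonneg _)
      (Finset.mem_univ i)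
  rw [causalWeight, expNegInvGlue.zero_of_nonpos, mul_zero]
  nlinarith [mul_nonneg hb hp]

theorem causalWeight_nonneg (l b : ℝ) (p : Fin (n + 1) → ℝ) : 0 ≤ causalWeight l b p :=
  mul_nonneg (Real.exp_nonneg _) (expNegInvGlue.nonneg _)

theorem energyDensity_nonneg (D : (Fin (n + 1) → ℝ) → ℝ) (p : Fin (n + 1) → ℝ) :
    0 ≤ energyDensity D p := by
  unfold energyDensity
  positivity

theorem divergence_energyCurrent_causalWeight_nonpos {D : (Fin (n + 1) → ℝ) → ℝ}
    (hD : ContDiff ℝ 2 D) {l b : ℝ} (hl : 0 ≤ l) (hb : 0 ≤ b) {p : Fin (n + 1) → ℝ} (hp : 0 ≤ p 0)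
    (hwave : |waveOperator D p| ≤ (l - 1) * |D p|) :
    ∑ i, coordDeriv i (energyCurrent (causalWeight l b) D i) p ≤ 0 := by
  have hspacelike : causalWeightSlope l b p = 0 ∨ ∑ i : Fin n, p i.succ ^ 2 ≤ b ^ 2 := by
    rw [or_iff_not_imp_right, not_le]
    intro hlarge
    rw [causalWeightSlope, deriv_expNegInvGlue_of_nonpos, mul_zero]
    nlinarith [mul_nonneg hb hp]
  obtain ⟨htime, hspace⟩ := coordDeriv_causalWeight l b p
  rw [divergence_energyCurrent (contDiff_causalWeight l b) hD, htime]
  simp only [hspace]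
  have hslope : 0 ≤ causalWeightSlope l b p :=
    mul_nonneg (Real.exp_nonneg _) (deriv_expNegInvGlue_nonneg _)
  refine le_of_eq_of_le ?_ (energy_inequality (g₀ := coordDeriv 0 D p)
    (g := fun i => coordDeriv i.succ D p) hl (causalWeight_nonneg l b p) hslope hb hspacelike hwave)
  rw [energyDensity, Fin.sum_univ_succ]
  simp only [Finset.mul_sum, neg_mul, Finset.sum_neg_distrib, sub_neg_eq_add]
  congr 2
  exact Finset.sum_congr rfl fun i _ => by ring

theorem energyDensity_eq_zero_of_initial {D : (Fin (n + 1) → ℝ) → ℝ} (hD : Differentiable ℝ D)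
    (hD₀ : ∀ p, p 0 = 0 → D p = 0) (hD₁ : ∀ p, p 0 = 0 → coordDeriv 0 D p = 0)
    {p : Fin (n + 1) → ℝ} (hp : p 0 = 0) : energyDensity D p = 0 := by
  have htangential : ∀ i : Fin n, coordDeriv i.succ D p = 0 := fun i => by
    have hline : HasLineDerivAt ℝ D (coordDeriv i.succ D p) p (Pi.single i.succ 1) :=
      (hD p).hasFDerivAt.hasLineDerivAt _
    refine hline.lineDeriv.symm.trans ?_
    have hconst : (fun s : ℝ => D (p + s • Pi.single i.succ 1)) = fun _ => 0 := by
      ext s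
      exact hD₀ _ (by simp [hp])
    rw [lineDeriv, hconst, deriv_const]
  simp [energyDensity, Fin.sum_univ_succ, hD₀ p hp, hD₁ p hp, htangential]

theorem eq_zero_of_abs_waveOperator_le {D : (Fin (n + 1) → ℝ) → ℝ} (hD : ContDiff ℝ 2 D)
    (hwave : ∀ S, IsCompact S → ∃ K, ∀ p ∈ S, |waveOperator D p| ≤ K * |D p|)
    (hD₀ : ∀ p, p 0 = 0 → D p = 0) (hD₁ : ∀ p, p 0 = 0 → coordDeriv 0 D p = 0)
    {p : Fin (n + 1) → ℝ} (hp : 0 ≤ p 0) : D p = 0 := by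
  set b : ℝ := 2 * p 0 + ∑ i : Fin n, p i.succ ^ 2 + 1
  have hsum : 0 ≤ ∑ i : Fin n, p i.succ ^ 2 := Finset.sum_nonneg fun i _ => sq_nonneg _
  have hb : 0 ≤ b := by positivity
  obtain ⟨K, hK⟩ := hwave (Icc (Fin.cons 0 fun _ => -b) (Fin.cons (p 0) fun _ => b)) isCompact_Icc
  set F := energyCurrent (causalWeight (|K| + 1) b) D with hFdef
  have hF : ∀ i, ContDiff ℝ 1 (F i) := contDiff_energyCurrent (contDiff_causalWeight _ b) hD
  have hsupp : ∀ q, 0 ≤ q 0 → (∃ i : Fin n, b ≤ |q i.succ|) → ∀ i, F i q = 0 := by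
    intro q hq hlarge i
    cases i using Fin.cases <;> simp [hFdef, energyCurrent, causalWeight_eq_zero hb hq hlarge]
  have hdiv := integral_divergence_slab hF hp hb hsupp
  have hnonpos : ∫ q in Icc (Fin.cons 0 fun _ => -b : Fin (n + 1) → ℝ)
      (Fin.cons (p 0) fun _ => b), ∑ i, coordDeriv i (F i) q ≤ 0 := by
    refine setIntegral_nonpos measurableSet_Icc fun q hq => ?_
    refine divergence_energyCurrent_causalWeight_nonpos hD (by positivity) hb (hq.1 0) ?_
    refine (hK q hq).trans ?_
    gcongr
    linarith [le_abs_self K]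
  have hbottom : ∫ x : Fin n → ℝ, F 0 (Fin.cons 0 x) = 0 := by
    simp [hFdef, energyCurrent, energyDensity_eq_zero_of_initial
      (hD.differentiable (by norm_num)) hD₀ hD₁]
  have hcont : Continuous fun x : Fin n → ℝ => F 0 (Fin.cons (p 0) x) :=
    (hF 0).continuous.comp (by fun_prop)
  have hnonneg : ∀ x : Fin n → ℝ, 0 ≤ F 0 (Fin.cons (p 0) x) := fun x =>
    mul_nonneg (causalWeight_nonneg _ _ _) (energyDensity_nonneg _ _)
  have hcompact : HasCompactSupport fun x : Fin n → ℝ => F 0 (Fin.cons (p 0) x) :=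
    HasCompactSupport.intro isCompact_Icc fun x hx => slice_eq_zero (fun q hq hlarge =>
      hsupp q hq hlarge 0) hp hx
  have hpoint : F 0 p = 0 := by
    by_contra hne
    have := hcont.integral_pos_of_hasCompactSupport_nonneg_nonzero (μ := volume) hcompact
      hnonneg (x := Fin.tail p) (by rwa [Fin.cons_self_tail])
    linarith
  have hweight : 0 < causalWeight (|K| + 1) b p :=
    mul_pos (Real.exp_pos _) (expNegInvGlue.pos_of_pos (by nlinarith))
  have henergy := (mul_eq_zero.1 hpoint : causalWeight _ b p = 0 ∨ _).resolve_left hweight.ne'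
  have hgrad : 0 ≤ ∑ i, coordDeriv i D p ^ 2 := Finset.sum_nonneg fun i _ => sq_nonneg _
  rw [energyDensity] at henergy
  exact pow_eq_zero_iff two_ne_zero |>.1 (by linarith [sq_nonneg (D p)])

end FiniteSpeed

/-! ### Radial symmetry -/

section AffineSubstitution

variable {X Y : Type*} [NormedAddCommGroup X] [NormedSpace ℝ X] [NormedAddCommGroup Y]
  [NormedSpace ℝ Y] {F : X → ℝ} {g : Y → X} {ℓ : Y →L[ℝ] X}

theorem fderiv_fderiv_comp_affine (hF : ContDiff ℝ 2 F) (hg : ∀ y, HasFDerivAt g ℓ y)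
    (y v w : Y) :
    fderiv ℝ (fderiv ℝ fun z => F (g z)) y v w = fderiv ℝ (fderiv ℝ F) (g y) (ℓ v) (ℓ w) := by
  have hfirst : (fderiv ℝ fun z => F (g z)) = fun z => (fderiv ℝ F (g z)).comp ℓ := by
    ext1 z
    exact ((hF.differentiable two_ne_zero _).hasFDerivAt.comp z (hg z)).fderiv
  have hsecond : HasFDerivAt (fun z => fderiv ℝ F (g z)) _ y :=
    ((hF.fderiv_right le_rfl).differentiable one_ne_zero _).hasFDerivAt.comp y (hg y)
  rw [hfirst, (hsecond.clm_comp (hasFDerivAt_const ℓ y)).fderiv]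
  simp

theorem deriv_deriv_comp_affine (hF : ContDiff ℝ 2 F) {g : ℝ → X} {e : X}
    (hg : ∀ s, HasDerivAt g e s) (s : ℝ) :
    deriv (deriv fun s => F (g s)) s = fderiv ℝ (fderiv ℝ F) (g s) e e := by
  have hfirst : (deriv fun s => F (g s)) = fun s => fderiv ℝ F (g s) e := by
    ext s
    exact ((hF.differentiable two_ne_zero _).hasFDerivAt.comp_hasDerivAt s (hg s)).deriv
  have hsecond := ((hF.fderiv_right le_rfl).differentiable one_ne_zero (g s)).hasFDerivAt
    |>.comp_hasDerivAt s (hg s)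
  rw [hfirst]
  simpa using (hsecond.clm_apply (hasDerivAt_const s e)).deriv

end AffineSubstitution

section Laplacian

open Laplacian

variable {E ι : Type*} [NormedAddCommGroup E] [InnerProductSpace ℝ E] [FiniteDimensional ℝ E]
  [Fintype ι] {f : E → ℝ}

theorem laplacian_eq_sum_fderiv_fderiv_orthonormalBasis (f : E → ℝ) (b : OrthonormalBasis ι ℝ E)
    (x : E) : Δ f x = ∑ i, fderiv ℝ (fderiv ℝ f) x (b i) (b i) := by
  simp [InnerProductSpace.laplacian_eq_iteratedFDeriv_orthonormalBasis f b,
    iteratedFDeriv_two_apply]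

theorem laplacian_comp_linearIsometryEquiv (hf : ContDiff ℝ 2 f) (O : E ≃ₗᵢ[ℝ] E) (x : E) :
    Δ (fun y => f (O y)) x = Δ f (O x) := by
  rw [laplacian_eq_sum_fderiv_fderiv_orthonormalBasis _ (stdOrthonormalBasis ℝ E),
    laplacian_eq_sum_fderiv_fderiv_orthonormalBasis _ ((stdOrthonormalBasis ℝ E).map O)]
  have hO : ∀ y, HasFDerivAt O (O : E →L[ℝ] E) y := fun y => (O : E →L[ℝ] E).hasFDerivAt
  simp [fderiv_fderiv_comp_affine hf hO]

theorem deriv_deriv_comp_sqrt_sq_add_sq {g : ℝ → ℝ} (hg : ContDiff ℝ 2 g) {r : ℝ} (hr : 0 < r) :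
    deriv (deriv fun s => g √(r ^ 2 + s ^ 2)) 0 = deriv g r / r := by
  have hroot : ∀ s, HasDerivAt (fun s => √(r ^ 2 + s ^ 2)) (s / √(r ^ 2 + s ^ 2)) s := fun s => by
    have h := ((hasDerivAt_pow 2 s).const_add (r ^ 2)).sqrt (by positivity)
    convert h using 1
    field_simp
    ring
  have hfirst : (deriv fun s => g √(r ^ 2 + s ^ 2)) =
      fun s => deriv g √(r ^ 2 + s ^ 2) * (s / √(r ^ 2 + s ^ 2)) := by
    ext s
    exact ((hg.differentiable (by norm_num) _).hasDerivAt.comp s (hroot s)).deriv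
  have hg' : Differentiable ℝ (deriv g) := (hg.deriv' (n := 1)).differentiable (by norm_num)
  have hsecond := ((hg' _).hasDerivAt.comp 0 (hroot 0)).fun_mul
    ((hasDerivAt_id' (0 : ℝ)).fun_div (hroot 0) (by positivity))
  rw [hfirst]
  refine hsecond.deriv.trans ?_
  simp [Real.sqrt_sq hr.le]
  field_simp

theorem laplacian_of_radial (hf : ContDiff ℝ 2 f) (hrad : ∀ x y, ‖x‖ = ‖y‖ → f x = f y)
    (b : OrthonormalBasis ι ℝ E) (i : ι) {r : ℝ} (hr : 0 < r) :
    Δ f (r • b i) = deriv (deriv fun s => f (s • b i)) r +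
      (Fintype.card ι - 1) * (deriv (fun s => f (s • b i)) r / r) := by
  classical
  have hg : ContDiff ℝ 2 fun s : ℝ => f (s • b i) := hf.comp (contDiff_id.smul contDiff_const)
  have htransverse : ∀ j ∈ Finset.univ.erase i,
      fderiv ℝ (fderiv ℝ f) (r • b i) (b j) (b j) = deriv (fun s => f (s • b i)) r / r := by
    intro j hj
    have hnorm : ∀ s : ℝ, f (r • b i + s • b j) = f (√(r ^ 2 + s ^ 2) • b i) := fun s => by
      refine hrad _ _ ?_
      have hortho : inner ℝ (r • b i) (s • b j) = 0 := by
        simp [real_inner_smul_left, real_inner_smul_right,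
          b.orthonormal.2 (Finset.ne_of_mem_erase hj).symm]
      rw [← sq_eq_sq₀ (norm_nonneg _) (norm_nonneg _), norm_add_sq_real, hortho]
      simp [norm_smul, Real.sq_sqrt (add_nonneg (sq_nonneg r) (sq_nonneg s))]
    have hline := deriv_deriv_comp_affine hf (g := fun s : ℝ => r • b i + s • b j)
      (fun s => ((hasDerivAt_id' s).smul_const (b j)).const_add _) 0
    rw [← deriv_deriv_comp_sqrt_sq_add_sq hg hr]
    simpa [hnorm] using hline.symm
  have hradial : deriv (deriv fun s => f (s • b i)) r = _ :=
    deriv_deriv_comp_affine hf (fun s => (hasDerivAt_id' s).smul_const (b i)) r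
  rw [laplacian_eq_sum_fderiv_fderiv_orthonormalBasis _ b,
    ← Finset.add_sum_erase _ _ (Finset.mem_univ i), Finset.sum_congr rfl htransverse]
  simp [hradial, Finset.card_erase_of_mem, Nat.cast_pred (Fintype.card_pos_iff.2 ⟨i⟩)]

end Laplacian

section SpacetimeMap

variable {E : Type*} [NormedAddCommGroup E] [InnerProductSpace ℝ E] {n : ℕ}
  (b : OrthonormalBasis (Fin n) ℝ E)

/-- The linear map sending `(t, x₁, …, xₙ)` to the space-time point `(∑ xᵢ bᵢ, t)`. -/
noncomputable def spacetimeMap : (Fin (n + 1) → ℝ) →L[ℝ] E × ℝ :=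
  (∑ i, (ContinuousLinearMap.proj i.succ).smulRight (b i)).prod (ContinuousLinearMap.proj 0)

theorem spacetimeMap_apply (p : Fin (n + 1) → ℝ) :
    spacetimeMap b p = (∑ i, p i.succ • b i, p 0) := by
  simp [spacetimeMap]

theorem spacetimeMap_cons_repr (x : E) (t : ℝ) :
    spacetimeMap b (Fin.cons t (b.repr x)) = (x, t) := by
  simp [spacetimeMap_apply, b.sum_repr]

theorem spacetimeMap_single_zero : spacetimeMap b (Pi.single 0 1) = (0, 1) := by
  simp [spacetimeMap_apply]

theorem spacetimeMap_single_succ (i : Fin n) : spacetimeMap b (Pi.single i.succ 1) = (b i, 0) := by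
  simp [spacetimeMap_apply, Pi.single_apply]

theorem coordDeriv_zero_comp_spacetimeMap {u : E → ℝ → ℝ}
    (hu : ContDiff ℝ 2 u.uncurry) (p : Fin (n + 1) → ℝ) :
    coordDeriv 0 (fun q => u.uncurry (spacetimeMap b q)) p =
      deriv (u (spacetimeMap b p).1) (spacetimeMap b p).2 := by
  have hu' := (hu.differentiable two_ne_zero (spacetimeMap b p)).hasFDerivAt
  have htime : HasDerivAt (u (spacetimeMap b p).1) _ (spacetimeMap b p).2 :=
    hu'.comp_hasDerivAt (spacetimeMap b p).2 ((hasDerivAt_const _ _).prodMk (hasDerivAt_id' _))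
  rw [htime.deriv, coordDeriv, ← spacetimeMap_single_zero b]
  exact DFunLike.congr_fun (hu'.comp p (spacetimeMap b).hasFDerivAt).fderiv _

end SpacetimeMap

section WaveEquation

open Laplacian

variable {E : Type*} [NormedAddCommGroup E] [InnerProductSpace ℝ E] [FiniteDimensional ℝ E]
  {f : ℝ → ℝ} {u v : E → ℝ → ℝ}

/-- The d'Alembertian `∂ₜ² - Δ` of a function of space and time. -/
noncomputable def dAlembertian (u : E → ℝ → ℝ) (x : E) (t : ℝ) : ℝ :=
  deriv (deriv (u x)) t - Δ (fun y => u y t) x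

/-- A `C²` global solution of the semilinear wave equation `∂ₜ²u - Δu = f(u)`. -/
structure IsWaveSolution (f : ℝ → ℝ) (u : E → ℝ → ℝ) : Prop where
  contDiff : ContDiff ℝ 2 u.uncurry
  equation : ∀ x t, dAlembertian u x t = f (u x t)

theorem dAlembertian_fun_sub (hu : ContDiff ℝ 2 u.uncurry) (hv : ContDiff ℝ 2 v.uncurry)
    (x : E) (t : ℝ) :
    dAlembertian (fun y s => u y s - v y s) x t = dAlembertian u x t - dAlembertian v x t := by
  have htime : ∀ {w : E → ℝ → ℝ}, ContDiff ℝ 2 w.uncurry → ContDiff ℝ 2 (w x) := fun hw =>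
    hw.comp (contDiff_prodMk_right x)
  have hspace : ∀ {w : E → ℝ → ℝ}, ContDiff ℝ 2 w.uncurry → ContDiff ℝ 2 fun y => w y t :=
    fun hw => hw.comp (contDiff_prodMk_left t)
  have hdiff : ∀ {w : E → ℝ → ℝ}, ContDiff ℝ 2 w.uncurry → Differentiable ℝ (deriv (w x)) :=
    fun hw => ((htime hw).deriv' (n := 1)).differentiable one_ne_zero
  have hfirst : deriv (fun s => u x s - v x s) = fun s => deriv (u x) s - deriv (v x) s := by
    ext s
    exact deriv_fun_sub ((htime hu).differentiable two_ne_zero s)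
      ((htime hv).differentiable two_ne_zero s)
  have hlaplacian := (hspace hu).contDiffAt.laplacian_sub (hspace hv).contDiffAt (x := x)
  simp only [dAlembertian, hfirst, deriv_fun_sub (hdiff hu t) (hdiff hv t)]
  rw [show (fun y => u y t - v y t) = (fun y => u y t) - fun y => v y t from rfl, hlaplacian]
  ring

section Coordinates

variable {n : ℕ} (b : OrthonormalBasis (Fin n) ℝ E)

theorem waveOperator_comp_spacetimeMap (hu : ContDiff ℝ 2 u.uncurry) (p : Fin (n + 1) → ℝ) :
    waveOperator (fun q => u.uncurry (spacetimeMap b q)) p =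
      dAlembertian u (spacetimeMap b p).1 (spacetimeMap b p).2 := by
  have hpull : ContDiff ℝ 2 fun q => u.uncurry (spacetimeMap b q) :=
    hu.comp (spacetimeMap b).contDiff
  have htime : deriv (deriv (u (spacetimeMap b p).1)) (spacetimeMap b p).2 = _ :=
    deriv_deriv_comp_affine hu (fun s => (hasDerivAt_const s _).prodMk (hasDerivAt_id' s)) _
  have hspace : ∀ v w, fderiv ℝ (fderiv ℝ fun y => u y (spacetimeMap b p).2)
      (spacetimeMap b p).1 v w = _ := fun v w =>
    fderiv_fderiv_comp_affine hu (fun y => hasFDerivAt_prodMk_left y _) _ v w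
  rw [waveOperator, dAlembertian, laplacian_eq_sum_fderiv_fderiv_orthonormalBasis _ b, htime]
  simp only [coordDeriv_coordDeriv hpull, hspace,
    fderiv_fderiv_comp_affine hu fun _ => (spacetimeMap b).hasFDerivAt, spacetimeMap_single_zero,
    spacetimeMap_single_succ, ContinuousLinearMap.inl_apply]

end Coordinates

namespace IsWaveSolution

theorem comp_linearIsometryEquiv (hu : IsWaveSolution f u) (O : E ≃ₗᵢ[ℝ] E) :
    IsWaveSolution f fun x => u (O x) where
  contDiff := hu.contDiff.comp (f := fun p : E × ℝ => (O p.1, p.2)) (by fun_prop)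
  equation x t := by
    have hspace : ContDiff ℝ 2 fun y => u y t := hu.contDiff.comp (contDiff_prodMk_left t)
    rw [← hu.equation, dAlembertian, laplacian_comp_linearIsometryEquiv hspace, dAlembertian]

theorem comp_neg (hu : IsWaveSolution f u) : IsWaveSolution f fun x t => u x (-t) where
  contDiff := hu.contDiff.comp (f := fun p : E × ℝ => (p.1, -p.2)) (by fun_prop)
  equation x t := by
    have hfirst : deriv (fun s => u x (-s)) = fun s => -deriv (u x) (-s) := by
      ext s
      exact deriv_comp_neg _ _
    rw [← hu.equation, dAlembertian, hfirst, deriv.fun_neg, deriv_comp_neg, neg_neg, dAlembertian]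

theorem exists_abs_dAlembertian_sub_le (hf : LocallyLipschitz f) (hu : IsWaveSolution f u)
    (hv : IsWaveSolution f v) {S : Set (E × ℝ)} (hS : IsCompact S) :
    ∃ K, ∀ z ∈ S, |dAlembertian (fun y s => u y s - v y s) z.1 z.2| ≤
      K * |u z.1 z.2 - v z.1 z.2| := by
  obtain ⟨K, hK⟩ := hf.locallyLipschitzOn.exists_lipschitzOnWith_of_compact
    ((hS.image hu.contDiff.continuous).union (hS.image hv.contDiff.continuous))
  refine ⟨K, fun z hz => ?_⟩
  rw [dAlembertian_fun_sub hu.contDiff hv.contDiff, hu.equation, hv.equation]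
  exact hK.dist_le_mul _ (.inl (mem_image_of_mem _ hz)) _ (.inr (mem_image_of_mem _ hz))

theorem eq_of_initial_eq_of_nonneg (hf : LocallyLipschitz f) (hu : IsWaveSolution f u)
    (hv : IsWaveSolution f v) (h₀ : ∀ x, u x 0 = v x 0) (h₁ : ∀ x, deriv (u x) 0 = deriv (v x) 0)
    (x : E) {t : ℝ} (ht : 0 ≤ t) : u x t = v x t := by
  let b := stdOrthonormalBasis ℝ E
  have hw : ContDiff ℝ 2 (Function.uncurry fun y s => u y s - v y s) := hu.contDiff.sub hv.contDiff
  have htime : ∀ p, p 0 = 0 → (spacetimeMap b p).2 = 0 := fun p hp => by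
    simp [spacetimeMap_apply, hp]
  have hwave : ∀ S, IsCompact S → ∃ K, ∀ p ∈ S,
      |waveOperator (fun q => Function.uncurry (fun y s => u y s - v y s) (spacetimeMap b q)) p| ≤
        K * |Function.uncurry (fun y s => u y s - v y s) (spacetimeMap b p)| := fun S hS => by
    obtain ⟨K, hK⟩ :=
      hu.exists_abs_dAlembertian_sub_le hf hv (hS.image (spacetimeMap b).continuous)
    refine ⟨K, fun p hp => ?_⟩
    rw [waveOperator_comp_spacetimeMap b hw]
    exact hK _ (mem_image_of_mem _ hp)
  have hvelocity : ∀ p, p 0 = 0 → coordDeriv 0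
      (fun q => Function.uncurry (fun y s => u y s - v y s) (spacetimeMap b q)) p = 0 :=
    fun p hp => by
      have hdiff : ∀ {w : E → ℝ → ℝ}, IsWaveSolution f w → ∀ y, Differentiable ℝ (w y) :=
        fun hw y => (hw.contDiff.comp (contDiff_prodMk_right y)).differentiable two_ne_zero
      rw [coordDeriv_zero_comp_spacetimeMap b hw, htime p hp,
        deriv_fun_sub (hdiff hu _ 0) (hdiff hv _ 0), h₁, sub_self]
  have hzero := eq_zero_of_abs_waveOperator_le (hw.comp (spacetimeMap b).contDiff) hwave
    (fun p hp => by simp [Function.uncurry, htime p hp, h₀]) hvelocity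
    (p := Fin.cons t (b.repr x)) ht
  simpa [spacetimeMap_cons_repr, sub_eq_zero] using hzero

theorem eq_of_initial_eq (hf : LocallyLipschitz f) (hu : IsWaveSolution f u)
    (hv : IsWaveSolution f v) (h₀ : ∀ x, u x 0 = v x 0)
    (h₁ : ∀ x, deriv (u x) 0 = deriv (v x) 0) : u = v := by
  ext x t
  rcases le_total 0 t with ht | ht
  · exact hu.eq_of_initial_eq_of_nonneg hf hv h₀ h₁ x ht
  · simpa using hu.comp_neg.eq_of_initial_eq_of_nonneg hf hv.comp_neg (by simpa using h₀)
      (fun y => by simp [deriv_comp_neg, h₁]) x (neg_nonneg.2 ht)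

theorem eq_of_norm_eq (hf : LocallyLipschitz f) (hu : IsWaveSolution f u)
    (h₀ : ∀ x y, ‖x‖ = ‖y‖ → u x 0 = u y 0)
    (h₁ : ∀ x y, ‖x‖ = ‖y‖ → deriv (u x) 0 = deriv (u y) 0) {x y : E} (hxy : ‖x‖ = ‖y‖) (t : ℝ) :
    u x t = u y t := by
  have hsymm := hu.eq_of_initial_eq hf (hu.comp_linearIsometryEquiv (ℝ ∙ (x - y))ᗮ.reflection)
    (fun z => h₀ _ _ (LinearIsometryEquiv.norm_map _ z).symm)
    (fun z => h₁ _ _ (LinearIsometryEquiv.norm_map _ z).symm)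
  rw [congrFun₂ hsymm x t, Submodule.reflection_sub hxy]

end IsWaveSolution

end WaveEquation

/-! ### The space-time bound -/

section SpaceTimeBound

variable {E : Type*} [NormedAddCommGroup E] [InnerProductSpace ℝ E] {ε A : ℝ} {u : E → ℝ → ℝ}

/-- The initial data of `u` are radially symmetric and satisfy the pointwise decay bounds with
constant `A` and excess exponent `ε`. -/
structure HasRadialDecayingData (ε A : ℝ) (u : E → ℝ → ℝ) : Prop where
  eq_of_norm_eq : ∀ x y, ‖x‖ = ‖y‖ → u x 0 = u y 0
  deriv_eq_of_norm_eq : ∀ x y, ‖x‖ = ‖y‖ → deriv (u x) 0 = deriv (u y) 0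
  abs_le : ∀ x, |u x 0| ≤ A * (1 + ‖x‖) ^ (-(1 / 2) - ε)
  abs_deriv_le : ∀ x, |deriv (u x) 0| ≤ A * (1 + ‖x‖) ^ (-(3 / 2) - ε)
  norm_fderiv_le : ∀ x, ‖fderiv ℝ (fun y => u y 0) x‖ ≤ A * (1 + ‖x‖) ^ (-(3 / 2) - ε)

namespace HasRadialDecayingData

theorem comp_neg (hu : HasRadialDecayingData ε A u) :
    HasRadialDecayingData ε A fun x t => u x (-t) where
  eq_of_norm_eq := by simpa using hu.eq_of_norm_eq
  deriv_eq_of_norm_eq := by simpa [deriv_comp_neg] using hu.deriv_eq_of_norm_eq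
  abs_le := by simpa using hu.abs_le
  abs_deriv_le := by simpa [deriv_comp_neg] using hu.abs_deriv_le
  norm_fderiv_le := by simpa using hu.norm_fderiv_le

theorem hasDecayingData (hu : HasRadialDecayingData ε A u)
    (hdiff : Differentiable ℝ fun y => u y 0) {e : E} (he : ‖e‖ = 1) :
    HasDecayingData ε A fun t r => u (r • e) t := by
  have hnorm : ∀ r, 0 ≤ r → ‖r • e‖ = r := fun r hr => by
    rw [norm_smul, he, mul_one, Real.norm_of_nonneg hr]
  refine ⟨fun r hr => ?_, fun r hr => ?_, fun r hr => ?_⟩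
  · simpa only [hnorm r hr] using hu.abs_le (r • e)
  · simpa only [timeDeriv, hnorm r hr] using hu.abs_deriv_le (r • e)
  · have hray : ∂ᵣ (fun t s => u (s • e) t) 0 r = fderiv ℝ (fun y => u y 0) (r • e) e := by
      refine (HasFDerivAt.comp_hasDerivAt r (hdiff (r • e)).hasFDerivAt
        ((hasDerivAt_id' r).smul_const e)).deriv.trans ?_
      rw [one_smul]
    rw [hray]
    refine ((fderiv ℝ (fun y => u y 0) (r • e)).le_opNorm e).trans ?_
    simpa only [hnorm r hr, he, mul_one] using hu.norm_fderiv_le (r • e)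

end HasRadialDecayingData

variable [FiniteDimensional ℝ E]

theorem IsWaveSolution.isRadialSolution (hu : IsWaveSolution (fun y => -y ^ 5) u)
    (hrad : ∀ x y t, ‖x‖ = ‖y‖ → u x t = u y t) (b : OrthonormalBasis (Fin 2) ℝ E) :
    IsRadialSolution fun t r => u (r • b 0) t where
  contDiff := hu.contDiff.comp (f := fun p : ℝ × ℝ => (p.2 • b 0, p.1)) (by fun_prop)
  equation t r hr := by
    have hlaplacian := laplacian_of_radial (f := fun y => u y t)
      (hu.contDiff.comp (contDiff_prodMk_left t)) (fun x y hxy => hrad x y t hxy) b 0 hr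
    have hwave := hu.equation (r • b 0) t
    rw [dAlembertian, hlaplacian] at hwave
    have htime : ∂ₜ (∂ₜ fun t r => u (r • b 0) t) t r = deriv (deriv (u (r • b 0))) t := rfl
    have hradial : ∂ᵣ (∂ᵣ fun t r => u (r • b 0) t) t r =
      deriv (deriv fun s => u (s • b 0) t) r := rfl
    rw [htime, hradial, radialDeriv]
    norm_num at hwave
    linarith

variable [MeasurableSpace E] [BorelSpace E]

theorem exists_lintegral_Ioi_lintegral_le (hE : Module.finrank ℝ E = 2) (μ : Measure E)
    [μ.IsAddHaarMeasure] (hε : 0 < ε) (hA : 0 < A) :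
    ∃ C : ENNReal, C ≠ ⊤ ∧ ∀ u : E → ℝ → ℝ, IsWaveSolution (fun y => -y ^ 5) u →
      HasRadialDecayingData ε A u →
        ∫⁻ t in Ioi (0 : ℝ), ∫⁻ x, ENNReal.ofReal (|u x t| ^ 6) ∂μ ≤ C := by
  obtain ⟨C, -, hC⟩ := IsRadialSolution.exists_lintegral_le hε hA
  have : Nontrivial E := Module.nontrivial_of_finrank_pos (R := ℝ) (by omega)
  let b := (stdOrthonormalBasis ℝ E).reindex (finCongr hE)
  refine ⟨μ.toSphere univ * ENNReal.ofReal C, by finiteness, fun u hu hdata => ?_⟩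
  have hrad : ∀ x y t, ‖x‖ = ‖y‖ → u x t = u y t := fun x y t hxy =>
    hu.eq_of_norm_eq (ContDiff.locallyLipschitz (𝕂 := ℝ) (by fun_prop))
      hdata.eq_of_norm_eq hdata.deriv_eq_of_norm_eq hxy t
  have hdiff : Differentiable ℝ fun y => u y 0 :=
    (hu.contDiff.comp (contDiff_prodMk_left 0)).differentiable two_ne_zero
  have hprofile := hu.isRadialSolution hrad b
  have hpolar : ∀ t, ∫⁻ x, ENNReal.ofReal (|u x t| ^ 6) ∂μ = μ.toSphere univ *
      ∫⁻ r in Ioi (0 : ℝ), ENNReal.ofReal (r * u (r • b 0) t ^ 6) := fun t => by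
    have hmeas : Measurable fun r : ℝ => ENNReal.ofReal (u (r • b 0) t ^ 6) :=
      ((hprofile.contDiff.continuous.comp (.prodMk_right t)).measurable.pow_const 6).ennreal_ofReal
    calc ∫⁻ x, ENNReal.ofReal (|u x t| ^ 6) ∂μ
        = ∫⁻ x, ENNReal.ofReal (u (‖x‖ • b 0) t ^ 6) ∂μ := by
          refine lintegral_congr fun x => ?_
          rw [hrad x (‖x‖ • b 0) t (by simp [norm_smul]), Even.pow_abs (by decide)]
      _ = μ.toSphere univ *
            ∫⁻ r in Ioi (0 : ℝ), ENNReal.ofReal (r * u (r • b 0) t ^ 6) := by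
          rw [lintegral_fun_norm μ hmeas, hE]
          congr 1
          refine setLIntegral_congr_fun measurableSet_Ioi fun r hr => ?_
          rw [ENNReal.ofReal_mul hr.le, pow_one]
  simp only [hpolar]
  rw [lintegral_const_mul']
  · gcongr
    exact hC _ hprofile (hdata.hasDecayingData hdiff (b.orthonormal.1 0))
  · finiteness

theorem exists_lintegral_lintegral_le (hE : Module.finrank ℝ E = 2) (μ : Measure E)
    [μ.IsAddHaarMeasure] (hε : 0 < ε) (hA : 0 < A) :
    ∃ C : ℝ, 0 < C ∧ ∀ u : E → ℝ → ℝ, IsWaveSolution (fun y => -y ^ 5) u →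
      HasRadialDecayingData ε A u →
        ∫⁻ t : ℝ, ∫⁻ x, ENNReal.ofReal (|u x t| ^ 6) ∂μ ≤ ENNReal.ofReal C := by
  obtain ⟨K, hK, hbound⟩ := exists_lintegral_Ioi_lintegral_le hE μ hε hA
  refine ⟨(2 * K).toReal + 1, by positivity, fun u hu hdata => ?_⟩
  calc ∫⁻ t : ℝ, ∫⁻ x, ENNReal.ofReal (|u x t| ^ 6) ∂μ
      ≤ K + K := by
        rw [lintegral_eq_lintegral_Ioi_add_comp_neg]
        exact add_le_add (hbound u hu hdata) (hbound _ hu.comp_neg hdata.comp_neg)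
    _ = ENNReal.ofReal (2 * K).toReal := by rw [ENNReal.ofReal_toReal (by finiteness), two_mul]
    _ ≤ ENNReal.ofReal ((2 * K).toReal + 1) := by gcongr; linarith

theorem dAlembertian_euclideanSpace {ι : Type*} [Fintype ι] [DecidableEq ι]
    {u : EuclideanSpace ℝ ι → ℝ → ℝ} (hu : ContDiff ℝ 2 u.uncurry) (x : EuclideanSpace ℝ ι)
    (t : ℝ) : dAlembertian u x t = deriv (deriv (u x)) t - ∑ i, fderiv ℝ
      (fun x' => fderiv ℝ (fun x'' => u x'' t) x' (EuclideanSpace.single i (1 : ℝ))) x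
        (EuclideanSpace.single i (1 : ℝ)) := by
  have hspace : ContDiff ℝ 2 fun y => u y t := hu.comp (contDiff_prodMk_left t)
  simp [dAlembertian, fderiv_fderiv_apply_const hspace,
    laplacian_eq_sum_fderiv_fderiv_orthonormalBasis _ (EuclideanSpace.basisFun ι ℝ)]

end SpaceTimeBound

/-- Theorem 6.1 / Theorem 6.22 (`main1` / `improved main theorem`, quantitative form): for
radial data on `ℝ²` with `|∇u₀|, |u₁| ≤ A(1+|x|)^{-3/2-ε}` and `|u₀| ≤ A(1+|x|)^{-1/2-ε}`,
every `C²` global solution of the defocusing quintic wave equation `∂ₜ²u - Δu = -|u|⁴u`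
has finite space-time norm `∫_ℝ ∫_{ℝ²} |u|⁶ dx dt ≤ C(ε, A)`. -/
theorem stmt_13 (ε A : ℝ) (hε : 0 < ε) (hA : 0 < A) :
    ∃ C : ℝ, 0 < C ∧
      ∀ u₀ u₁ : EuclideanSpace ℝ (Fin 2) → ℝ,
        ContDiff ℝ 1 u₀ →
        Continuous u₁ →
        (∀ x y : EuclideanSpace ℝ (Fin 2), ‖x‖ = ‖y‖ → u₀ x = u₀ y) →
        (∀ x y : EuclideanSpace ℝ (Fin 2), ‖x‖ = ‖y‖ → u₁ x = u₁ y) →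
        (∀ x : EuclideanSpace ℝ (Fin 2),
          ‖fderiv ℝ u₀ x‖ ≤ A * (1 + ‖x‖) ^ (-(3 / 2) - ε)) →
        (∀ x : EuclideanSpace ℝ (Fin 2), |u₁ x| ≤ A * (1 + ‖x‖) ^ (-(3 / 2) - ε)) →
        (∀ x : EuclideanSpace ℝ (Fin 2), |u₀ x| ≤ A * (1 + ‖x‖) ^ (-(1 / 2) - ε)) →
      ∀ u : EuclideanSpace ℝ (Fin 2) → ℝ → ℝ,
        ContDiff ℝ 2 (fun p : EuclideanSpace ℝ (Fin 2) × ℝ => u p.1 p.2) →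
        (∀ (x : EuclideanSpace ℝ (Fin 2)) (t : ℝ),
          deriv (deriv (u x)) t -
            (∑ i : Fin 2,
              fderiv ℝ (fun x' => fderiv ℝ (fun x'' => u x'' t) x'
                (EuclideanSpace.single i (1 : ℝ))) x (EuclideanSpace.single i (1 : ℝ)))
            = -(|u x t| ^ 4 * u x t)) →
        (∀ x : EuclideanSpace ℝ (Fin 2), u x 0 = u₀ x) →
        (∀ x : EuclideanSpace ℝ (Fin 2), deriv (u x) 0 = u₁ x) →
        ∫⁻ t : ℝ, ∫⁻ x : EuclideanSpace ℝ (Fin 2), ENNReal.ofReal (|u x t| ^ 6) ≤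
          ENNReal.ofReal C := by
  obtain ⟨C, hC, hbound⟩ := exists_lintegral_lintegral_le (E := EuclideanSpace ℝ (Fin 2))
    finrank_euclideanSpace_fin volume hε hA
  refine ⟨C, hC, fun u₀ u₁ _ _ hrad₀ hrad₁ hgrad hvel hpos u hu hwave h₀ h₁ => ?_⟩
  obtain rfl : (fun x => u x 0) = u₀ := funext h₀
  obtain rfl : (fun x => deriv (u x) 0) = u₁ := funext h₁
  refine hbound u ⟨hu, fun x t => ?_⟩ ⟨hrad₀, hrad₁, hpos, hvel, hgrad⟩
  rw [dAlembertian_euclideanSpace hu, hwave, Even.pow_abs (by decide)]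
  ring
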